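/- Uniqueness for the coupled parabolic system with mixed boundary conditions: if ρ̂₁ and ρ̂₂ are two weak solutions in (L²([0,T],H¹(Λ)))² of ∂_t ρ̂ = ∇·(∇ρ̂ − (1/2)Σ(ρ̂)(Ê + 2∇Ĥ)) on Λ = (−1,1)×𝕋^{d−1}, with ρ̂ = b̂ on Γ⁻, ∂_{e₁}ρ̂ = (1/2)Σ(ρ̂)(Ê₁ + 2∂_{e₁}Ĥ) on Γ⁺, taking values in [−1,1]×[0,1], and the same initial data γ̂, then ρ̂₁ = ρ̂₂ a.e. The proof uses the spectral expansion in the eigenbasis (V_n), the Lipschitz continuity of the entries of Σ on the compact [−1,1]×[0,1], and Grönwall's inequality applied to G(t) = ‖ρ̂₁(t) − ρ̂₂(t)‖²_{L²}. -/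

import Mathlib

open MeasureTheory Set Matrix

/-- The open cylinder `Λ = (−1,1) × 𝕋^{d}` (total dimension `d+1`), represented
by the fundamental domain `(−1,1) × [0,1)^{d}` in `ℝ^{d+1}`. -/
def cylDomain (d : ℕ) : Set (Fin (d + 1) → ℝ) :=
  {x | -1 < x 0 ∧ x 0 < 1 ∧ ∀ i, i ≠ 0 → 0 ≤ x i ∧ x i < 1}

/-- The mobility matrix `Σ(m,φ)`. -/
noncomputable def SigmaBC (a : Fin 2 → ℝ) : Matrix (Fin 2) (Fin 2) ℝ :=
  (2 : ℝ) • !![a 1 - a 0 ^ 2, a 0 * (1 - a 1); a 0 * (1 - a 1), a 1 * (1 - a 1)]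

/-- Scalar test functions in `C_c^∞((0,T)×Λ)`. -/
def TestScalar (d : ℕ) (T : ℝ) (ψ : ℝ → (Fin (d + 1) → ℝ) → ℝ) : Prop :=
  ContDiff ℝ (⊤ : ℕ∞) (fun p : ℝ × (Fin (d + 1) → ℝ) => ψ p.1 p.2) ∧
  (∀ (t : ℝ) (x : Fin (d + 1) → ℝ) (i : Fin (d + 1)), i ≠ 0 →
    ψ t (x + Pi.single i 1) = ψ t x) ∧
  ∃ ε : ℝ, 0 < ε ∧ ∀ (t : ℝ) (x : Fin (d + 1) → ℝ),
    (t ≤ ε ∨ T - ε ≤ t ∨ x 0 ≤ -1 + ε ∨ 1 - ε ≤ x 0) → ψ t x = 0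

/-- Test functions of class `C^{1,2}_{0,−}([0,T]×Λ̄)` (with values in `ℝ²`):
smooth, periodic in the torus directions, vanishing on the left boundary `Γ⁻`. -/
def TestBdry (d : ℕ) (G : ℝ → (Fin (d + 1) → ℝ) → Fin 2 → ℝ) : Prop :=
  ContDiff ℝ 2 (fun p : ℝ × (Fin (d + 1) → ℝ) => G p.1 p.2) ∧
  (∀ (t : ℝ) (x : Fin (d + 1) → ℝ) (i : Fin (d + 1)), i ≠ 0 →
    G t (x + Pi.single i 1) = G t x) ∧
  (∀ (t : ℝ) (x : Fin (d + 1) → ℝ), x 0 = -1 → G t x = 0)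

/-- `(ρ, g, τ)` is a weak solution of the boundary-driven perturbed system
`∂_t ρ̂ = ∇·(∇ρ̂ − ½Σ(ρ̂)(Ê + 2∇Ĥ))`, with Dirichlet data `b̂` on `Γ⁻`, Neumann
data `∂₁ρ̂ = ½Σ(ρ̂)(Ê₁ + 2∂₁Ĥ)` on `Γ⁺` and initial data `γ̂`.  Here `g` is the
weak spatial gradient of `ρ` and `τ` its trace on `Γ⁺` (characterized by the
Gauss–Green identity); surface integrals over `Γ^±` are written as `½ ∫_Λ` of
integrands independent of the first coordinate. -/
def IsWeakSolutionBC (d : ℕ) (T : ℝ)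
    (E : Fin (d + 1) → Fin 2 → ℝ) (H : ℝ → (Fin (d + 1) → ℝ) → Fin 2 → ℝ)
    (b γ : (Fin (d + 1) → ℝ) → Fin 2 → ℝ)
    (ρ : ℝ → (Fin (d + 1) → ℝ) → Fin 2 → ℝ)
    (g : Fin (d + 1) → ℝ → (Fin (d + 1) → ℝ) → Fin 2 → ℝ)
    (τ : ℝ → (Fin (d + 1) → ℝ) → Fin 2 → ℝ) : Prop :=
  -- measurability and pointwise bounds `ρ̂ ∈ [−1,1] × [0,1]`
  Measurable (fun p : ℝ × (Fin (d + 1) → ℝ) => ρ p.1 p.2) ∧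
  (∀ t x, ρ t x 0 ∈ Set.Icc (-1 : ℝ) 1 ∧ ρ t x 1 ∈ Set.Icc (0 : ℝ) 1) ∧
  -- `g` is the weak spatial gradient of `ρ`, square integrable
  (∀ k, Measurable (fun p : ℝ × (Fin (d + 1) → ℝ) => g k p.1 p.2)) ∧
  (∀ (k : Fin (d + 1)) (i : Fin 2) (ψ : ℝ → (Fin (d + 1) → ℝ) → ℝ), TestScalar d T ψ →
    ∫ p in (Set.Ioo 0 T ×ˢ cylDomain d),
        ρ p.1 p.2 i * fderiv ℝ (ψ p.1) p.2 (Pi.single k 1) =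
      -∫ p in (Set.Ioo 0 T ×ˢ cylDomain d), g k p.1 p.2 i * ψ p.1 p.2) ∧
  Integrable (fun p : ℝ × (Fin (d + 1) → ℝ) => ∑ k, ∑ i : Fin 2, g k p.1 p.2 i ^ 2)
    (volume.restrict (Set.Ioo 0 T ×ˢ cylDomain d)) ∧
  -- `τ` is the trace of `ρ` on `Γ⁺`: it is independent of the first coordinate,
  -- and satisfies the Gauss–Green identity against test functions vanishing on `Γ⁻`
  Measurable (fun p : ℝ × (Fin (d + 1) → ℝ) => τ p.1 p.2) ∧
  (∀ (t : ℝ) (x : Fin (d + 1) → ℝ) (c : ℝ), τ t (Function.update x 0 c) = τ t x) ∧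
  (∀ (i : Fin 2) (ψ : ℝ → (Fin (d + 1) → ℝ) → ℝ),
    ContDiff ℝ 1 (fun p : ℝ × (Fin (d + 1) → ℝ) => ψ p.1 p.2) →
    (∀ (t : ℝ) (x : Fin (d + 1) → ℝ) (j : Fin (d + 1)), j ≠ 0 →
      ψ t (x + Pi.single j 1) = ψ t x) →
    (∀ (t : ℝ) (x : Fin (d + 1) → ℝ), x 0 = -1 → ψ t x = 0) →
    ∫ p in (Set.Ioo 0 T ×ˢ cylDomain d),
        (ρ p.1 p.2 i * fderiv ℝ (ψ p.1) p.2 (Pi.single 0 1) + g 0 p.1 p.2 i * ψ p.1 p.2) =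
      (1 / 2) * ∫ p in (Set.Ioo 0 T ×ˢ cylDomain d),
        τ p.1 p.2 i * ψ p.1 (Function.update p.2 0 1)) ∧
  -- the weak formulation `ℓ_G^{Ê,Ĥ}(ρ̂ | γ̂) = 0` for all admissible test functions
  (∀ G : ℝ → (Fin (d + 1) → ℝ) → Fin 2 → ℝ, TestBdry d G →
    ((∫ x in cylDomain d, ∑ i : Fin 2, ρ T x i * G T x i)
      - (∫ x in cylDomain d, ∑ i : Fin 2, γ x i * G 0 x i)
      - (∫ p in (Set.Ioo 0 T ×ˢ cylDomain d),
          ∑ i : Fin 2, ρ p.1 p.2 i * deriv (fun s => G s p.2 i) p.1)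
      - (∫ p in (Set.Ioo 0 T ×ˢ cylDomain d),
          ∑ i : Fin 2, ρ p.1 p.2 i *
            ∑ k, fderiv ℝ (fun y => fderiv ℝ (fun z => G p.1 z i) y (Pi.single k 1)) p.2
              (Pi.single k 1))
      - (1 / 2) * (∫ p in (Set.Ioo 0 T ×ˢ cylDomain d),
          ∑ i : Fin 2, b p.2 i *
            fderiv ℝ (fun y => G p.1 y i) (Function.update p.2 0 (-1)) (Pi.single 0 1))
      + (1 / 2) * (∫ p in (Set.Ioo 0 T ×ˢ cylDomain d),
          ∑ i : Fin 2, τ p.1 p.2 i *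
            fderiv ℝ (fun y => G p.1 y i) (Function.update p.2 0 1) (Pi.single 0 1))
      - (1 / 2) * (∫ p in (Set.Ioo 0 T ×ˢ cylDomain d),
          ∑ k, (fun i => fderiv ℝ (fun y => G p.1 y i) p.2 (Pi.single k 1)) ⬝ᵥ
            (SigmaBC (ρ p.1 p.2)).mulVec
              (fun i => E k i + 2 * fderiv ℝ (fun y => H p.1 y i) p.2 (Pi.single k 1)))) = 0)


lemma restr_cyl (d : ℕ) : (volume : Measure (Fin (d+1) → ℝ)).restrict (cylDomain d) =
    Measure.pi (Fin.cons (volume.restrict (Ioc (-1:ℝ) 1)) (fun _ => volume.restrict (Ioc (0:ℝ) 1))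
      : Fin (d+1) → Measure ℝ) := by
  have h : cylDomain d = Set.univ.pi (Fin.cons (Ioo (-1:ℝ) 1) (fun _ => Ico (0:ℝ) 1)
      : Fin (d+1) → Set ℝ) := by
    ext x
    simp only [cylDomain, mem_ofPred_eq, Set.mem_pi, mem_univ, true_implies]
    rw [Fin.forall_fin_succ, Fin.forall_fin_succ]
    simp [and_assoc]
  rw [h, volume_pi, Measure.restrict_pi_pi]
  congr 1
  funext i
  refine Fin.cases ?_ (fun j => ?_) i
  · simp only [Fin.cons_zero]; exact Measure.restrict_congr_set Ioo_ae_eq_Ioc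
  · simp only [Fin.cons_succ]; exact Measure.restrict_congr_set Ico_ae_eq_Ioc

lemma restr_box (m : ℕ) : (volume : Measure (Fin m → ℝ)).restrict {x | ∀ i, x i ∈ Ioc (0:ℝ) 1} =
    Measure.pi (fun _ => volume.restrict (Ioc (0:ℝ) 1)) := by
  have h : {x : Fin m → ℝ | ∀ i, x i ∈ Ioc (0:ℝ) 1} = Set.univ.pi (fun _ => Ioc (0:ℝ) 1) := by
    ext x; simp
  rw [h, volume_pi, Measure.restrict_pi_pi]

instance fin_cyl (d : ℕ) : IsFiniteMeasure
    ((volume : Measure (Fin (d+1) → ℝ)).restrict (cylDomain d)) := by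
  rw [restr_cyl]
  have : ∀ i, IsFiniteMeasure ((Fin.cons (volume.restrict (Ioc (-1:ℝ) 1))
    (fun _ => volume.restrict (Ioc (0:ℝ) 1)) : Fin (d+1) → Measure ℝ) i) := by
    intro i
    refine Fin.cases ?_ (fun j => ?_) i
    · simp only [Fin.cons_zero]; infer_instance
    · simp only [Fin.cons_succ]; infer_instance
  infer_instance

lemma slice_int {E : Type*} [NormedAddCommGroup E] [NormedSpace ℝ E] [MeasurableSpace E]
    [BorelSpace E] [SecondCountableTopology E]
    (d : ℕ) (ν : Measure ℝ) [IsFiniteMeasure ν]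
    (f : (Fin (d+1) → ℝ) → E) (hf : Measurable f) (C : ℝ) (hC : ∀ x, ‖f x‖ ≤ C) :
    Integrable (fun z => ∫ y in {y : Fin d → ℝ | ∀ i, y i ∈ Ioc (0:ℝ) 1}, f (Fin.cons z y)) ν ∧
    ∫ x, f x ∂(Measure.pi (Fin.cons ν (fun _ => volume.restrict (Ioc (0:ℝ) 1))
      : Fin (d+1) → Measure ℝ)) =
    ∫ z, (∫ y in {y : Fin d → ℝ | ∀ i, y i ∈ Ioc (0:ℝ) 1}, f (Fin.cons z y)) ∂ν := by
  have : ∀ i, IsFiniteMeasure ((Fin.cons ν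
    (fun _ => volume.restrict (Ioc (0:ℝ) 1)) : Fin (d+1) → Measure ℝ) i) := by
    intro i
    refine Fin.cases ?_ (fun j => ?_) i
    · simp only [Fin.cons_zero]; infer_instance
    · simp only [Fin.cons_succ]; infer_instance
  have h := (measurePreserving_piFinSuccAbove (Fin.cons ν
    (fun _ => volume.restrict (Ioc (0:ℝ) 1)) : Fin (d+1) → Measure ℝ) 0).symm
  simp only [Fin.cons_zero, Fin.zero_succAbove, Fin.cons_succ] at h
  rw [restr_box]
  rw [← h.integral_comp (MeasurableEquiv.measurableEmbedding _)]
  have hint : Integrable (fun p : ℝ × (Fin d → ℝ) => f (Fin.cons p.1 p.2))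
      (ν.prod (Measure.pi fun _ => volume.restrict (Ioc (0:ℝ) 1))) := by
    refine Integrable.of_bound (C := C) ?_ (Filter.Eventually.of_forall fun x => hC _)
    refine (hf.comp ?_).aestronglyMeasurable
    refine measurable_pi_lambda _ fun i => ?_
    refine Fin.cases ?_ (fun j => ?_) i
    · simp only [Fin.cons_zero]; fun_prop
    · simp only [Fin.cons_succ]; fun_prop
  constructor
  · exact hint.integral_prod_left
  · rw [← integral_prod _ hint]
    refine integral_congr_ae (Filter.Eventually.of_forall fun p => ?_)
    simp [MeasurableEquiv.piFinSuccAbove, Fin.insertNthEquiv]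

lemma fold_int {E : Type*} [NormedAddCommGroup E] [NormedSpace ℝ E] [MeasurableSpace E]
    [BorelSpace E] [SecondCountableTopology E]
    (d : ℕ) (f : (Fin (d+1) → ℝ) → E) (hf : Measurable f) (C : ℝ) (hC : ∀ x, ‖f x‖ ≤ C) :
    ∫ x in {x : Fin (d+1) → ℝ | ∀ i, x i ∈ Ioc (0:ℝ) 1}, f x =
    (1/4 : ℝ) • ∫ x in cylDomain d, (f (Function.update x 0 ((x 0 + 1)/4)) +
      f (Function.update x 0 ((3 - x 0)/4))) := by
  have hm1 : Measurable (fun x : Fin (d+1) → ℝ => Function.update x 0 ((x 0 + 1)/4)) := by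
    refine measurable_pi_lambda _ fun i => ?_
    refine Fin.cases ?_ (fun j => ?_) i
    · simp only [Function.update_self]; fun_prop
    · simp only [Function.update_of_ne (Fin.succ_ne_zero j)]; fun_prop
  have hm2 : Measurable (fun x : Fin (d+1) → ℝ => Function.update x 0 ((3 - x 0)/4)) := by
    refine measurable_pi_lambda _ fun i => ?_
    refine Fin.cases ?_ (fun j => ?_) i
    · simp only [Function.update_self]; fun_prop
    · simp only [Function.update_of_ne (Fin.succ_ne_zero j)]; fun_prop
  have i1 : Integrable (fun x : Fin (d+1) → ℝ => f (Function.update x 0 ((x 0 + 1)/4)))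
      (volume.restrict (cylDomain d)) :=
    Integrable.of_bound (hf.comp hm1).aestronglyMeasurable C (Filter.Eventually.of_forall fun x => hC _)
  have i2 : Integrable (fun x : Fin (d+1) → ℝ => f (Function.update x 0 ((3 - x 0)/4)))
      (volume.restrict (cylDomain d)) :=
    Integrable.of_bound (hf.comp hm2).aestronglyMeasurable C (Filter.Eventually.of_forall fun x => hC _)
  rw [integral_add i1 i2, restr_cyl, restr_box]
  have hcons : (fun _ => volume.restrict (Ioc (0:ℝ) 1) : Fin (d+1) → Measure ℝ) =
      Fin.cons (volume.restrict (Ioc (0:ℝ) 1)) (fun _ => volume.restrict (Ioc (0:ℝ) 1)) := by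
    funext i; refine Fin.cases ?_ (fun j => ?_) i <;> simp
  have s1 := (slice_int d (volume.restrict (Ioc (-1:ℝ) 1)) _ (hf.comp hm1) C (fun x => hC _)).2
  have s2 := (slice_int d (volume.restrict (Ioc (-1:ℝ) 1)) _ (hf.comp hm2) C (fun x => hC _)).2
  simp only [Function.comp_apply] at s1 s2
  rw [hcons, s1, s2, (slice_int d _ _ hf C hC).2]
  have hi := (slice_int d (volume.restrict (Ioc (0:ℝ) 1)) _ hf C hC).1
  simp only [Fin.cons_zero, Fin.update_cons_zero]
  set J : ℝ → E := fun z => ∫ y in {y : Fin d → ℝ | ∀ i, y i ∈ Ioc (0:ℝ) 1}, f (Fin.cons z y)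
    with hJ
  change ∫ z in Ioc (0:ℝ) 1, J z = (1/4 : ℝ) • ((∫ z in Ioc (-1:ℝ) 1, J ((z+1)/4)) +
    ∫ z in Ioc (-1:ℝ) 1, J ((3-z)/4))
  rw [← intervalIntegral.integral_of_le (by norm_num), ← intervalIntegral.integral_of_le (by norm_num),
    ← intervalIntegral.integral_of_le (by norm_num)]
  have e1 : ∫ z in (-1:ℝ)..1, J ((z+1)/4) = (4:ℝ) • ∫ z in (0:ℝ)..(1/2), J z := by
    have h : ∀ z : ℝ, J ((z+1)/4) = J (1/4 * z + 1/4) := fun z => by congr 1; ring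
    simp only [h]
    rw [intervalIntegral.integral_comp_mul_add J (by norm_num)]
    norm_num
  have e2 : ∫ z in (-1:ℝ)..1, J ((3-z)/4) = (4:ℝ) • ∫ z in (1/2:ℝ)..1, J z := by
    have h : ∀ z : ℝ, J ((3-z)/4) = J ((-1/4) * z + 3/4) := fun z => by congr 1; ring
    simp only [h]
    rw [intervalIntegral.integral_comp_mul_add J (by norm_num),
      intervalIntegral.integral_symm, smul_neg, ← neg_smul]
    norm_num
  have hI : IntegrableOn J (Ioc 0 1) := hi
  rw [e1, e2, ← smul_add, smul_smul, intervalIntegral.integral_add_adjacent_intervals]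
  · norm_num
  · rw [intervalIntegrable_iff_integrableOn_Ioc_of_le (by norm_num)]
    exact hI.mono_set (Ioc_subset_Ioc le_rfl (by norm_num))
  · rw [intervalIntegrable_iff_integrableOn_Ioc_of_le (by norm_num)]
    exact hI.mono_set (Ioc_subset_Ioc (by norm_num) le_rfl)

noncomputable local instance u19_ms : MeasureSpace UnitAddCircle := ⟨AddCircle.haarAddCircle⟩
local instance u19_ha : Measure.IsAddHaarMeasure (volume : Measure UnitAddCircle) :=
  inferInstanceAs (Measure.IsAddHaarMeasure AddCircle.haarAddCircle)
local instance u19_pm : IsProbabilityMeasure (volume : Measure UnitAddCircle) :=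
  inferInstanceAs (IsProbabilityMeasure AddCircle.haarAddCircle)

lemma parseval_box (m : ℕ) (U : (Fin m → ℝ) → ℂ) (hU : Measurable U) (C : ℝ)
    (hC : ∀ x, ‖U x‖ ≤ C) :
    HasSum (fun n : Fin m → ℤ => ‖∫ x in {x : Fin m → ℝ | ∀ i, x i ∈ Ioc (0:ℝ) 1},
        Complex.exp (-(2 * Real.pi * Complex.I * ∑ i, n i * x i)) * U x‖ ^ 2)
      (∫ x in {x : Fin m → ℝ | ∀ i, x i ∈ Ioc (0:ℝ) 1}, ‖U x‖ ^ 2) := by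
  let s : UnitAddTorus (Fin m) → (Fin m → ℝ) := fun x => (UnitAddTorus.measurableEquivPiIoc 0 x).1
  have hs : Measurable s := measurable_subtype_coe.comp (MeasurableEquiv.measurable _)
  have hs' : ∀ x : Fin m → ℝ, (∀ i, x i ∈ Ioc (0:ℝ) 1) →
      s (fun i => (x i : UnitAddCircle)) = x := by
    intro x hx
    have := (UnitAddTorus.measurableEquivPiIoc (ι := Fin m) 0).apply_symm_apply
      ⟨x, by simpa using hx⟩
    rw [UnitAddTorus.coe_symm_measurableEquivPiIoc_apply] at this
    exact congrArg Subtype.val this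
  have hmeas : MeasurableSet {x : Fin m → ℝ | ∀ i, x i ∈ Ioc (0:ℝ) 1} :=
    MeasurableSet.univ_pi' (fun i => measurableSet_Ioc)
  have hL : MemLp (fun x => U (s x)) 2 (volume : Measure (UnitAddTorus (Fin m))) :=
    MemLp.of_bound (hU.comp hs).aestronglyMeasurable C (Filter.Eventually.of_forall fun x => hC _)
  have key := UnitAddTorus.hasSum_sq_mFourierCoeff (hL.toLp _)
  have e1 : ∫ t : UnitAddTorus (Fin m), ‖(hL.toLp _ : UnitAddTorus (Fin m) → ℂ) t‖ ^ 2
      = ∫ x in {x : Fin m → ℝ | ∀ i, x i ∈ Ioc (0:ℝ) 1}, ‖U x‖ ^ 2 := by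
    rw [integral_congr_ae (g := fun t => ‖U (s t)‖ ^ 2)]
    · rw [UnitAddTorus.integral_preimage _ 0]
      simp only [Pi.zero_apply, zero_add]
      refine setIntegral_congr_fun hmeas fun x hx => ?_
      simp only [hs' x hx]
    · filter_upwards [hL.coeFn_toLp] with t ht
      rw [ht]
  rw [e1] at key
  convert key using 3 with n
  congr 1
  rw [UnitAddTorus.mFourierCoeff]
  rw [integral_congr_ae (g := fun t => UnitAddTorus.mFourier (-n) t • U (s t))]
  · rw [UnitAddTorus.integral_preimage _ 0]
    simp only [Pi.zero_apply, zero_add]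
    refine setIntegral_congr_fun hmeas fun x hx => ?_
    simp only [hs' x hx, UnitAddTorus.mFourier, ContinuousMap.coe_mk, smul_eq_mul]
    congr 1
    simp only [fourier_coe_apply, ← Complex.exp_sum]
    congr 1
    rw [Complex.ofReal_sum, Finset.mul_sum, ← Finset.sum_neg_distrib]
    refine Finset.sum_congr rfl fun i _ => ?_
    push_cast [Pi.neg_apply]
    simp; ring
  · filter_upwards [hL.coeFn_toLp] with t ht
    rw [ht]

noncomputable def u19mu {d : ℕ} (n : Fin (d+1) → ℤ) : Fin (d+1) → ℝ :=
  Fin.cons ((2 * n 0 + 1) * Real.pi / 4) (fun j => 2 * Real.pi * n j.succ)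

noncomputable def u19beta {d : ℕ} (n : Fin (d+1) → ℤ) (x : Fin (d+1) → ℝ) : ℝ :=
  ∑ j : Fin d, u19mu n j.succ * x j.succ

noncomputable def u19W {d : ℕ} (n : Fin (d+1) → ℤ) (δ₀ δ₁ : ℝ) (x : Fin (d+1) → ℝ) : ℝ :=
  Real.cos (u19mu n 0 * (x 0 + 1) + δ₀) * Real.cos (u19beta n x + δ₁)

lemma u19W_cont {d : ℕ} (n : Fin (d+1) → ℤ) (δ₀ δ₁ : ℝ) : Continuous (u19W n δ₀ δ₁) := by
  unfold u19W u19beta; fun_prop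

lemma u19W_le {d : ℕ} (n : Fin (d+1) → ℤ) (δ₀ δ₁ : ℝ) (x) : |u19W n δ₀ δ₁ x| ≤ 1 := by
  unfold u19W
  rw [abs_mul]
  exact mul_le_one₀ (Real.abs_cos_le_one _) (abs_nonneg _) (Real.abs_cos_le_one _)

lemma meas_cyl (d : ℕ) : MeasurableSet (cylDomain d) := by
  unfold cylDomain
  measurability

lemma parseval_cyl_aux (d : ℕ) (σ δ₀ : ℝ) (κ : ℂ) (hσ : |σ| = 1) (hκ : ‖κ‖ = 2)
    (hu : ∀ u : ℝ, Complex.exp (-(u * Complex.I)) - σ * Complex.exp (u * Complex.I)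
      = κ * (Real.cos (u + δ₀) : ℝ))
    (h : (Fin (d+1) → ℝ) → ℝ) (hh : Measurable h) (C : ℝ) (hC : ∀ x, |h x| ≤ C) :
    HasSum (fun n : Fin (d+1) → ℤ => (∫ x in cylDomain d, h x * u19W n δ₀ 0 x) ^ 2 +
        (∫ x in cylDomain d, h x * u19W n δ₀ (Real.pi / 2) x) ^ 2)
      (2 * ∫ x in cylDomain d, h x ^ 2) := by
  have hC0 : 0 ≤ C := (abs_nonneg _).trans (hC 0)
  have hm : ∀ φ : ℝ → ℝ, Measurable φ →
      Measurable (fun x : Fin (d+1) → ℝ => Function.update x 0 (φ (x 0))) := by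
    intro φ hφ
    refine measurable_pi_lambda _ fun i => ?_
    refine Fin.cases ?_ (fun j => ?_) i
    · simp only [Function.update_self]; fun_prop
    · simp only [Function.update_of_ne (Fin.succ_ne_zero j)]; fun_prop
  let U : (Fin (d+1) → ℝ) → ℂ := fun z => Complex.exp (-((Real.pi * z 0 : ℝ) * Complex.I)) *
    ((if z 0 ≤ 1/2 then h (Function.update z 0 (4 * z 0 - 1)) else
      σ * h (Function.update z 0 (3 - 4 * z 0)) : ℝ) : ℂ)
  have hUm : Measurable U := by
    refine Measurable.mul (by fun_prop) (Complex.measurable_ofReal.comp ?_)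
    refine Measurable.ite (measurableSet_le (by fun_prop) (by fun_prop)) ?_ ?_
    · exact hh.comp (hm (fun t => 4 * t - 1) (by fun_prop))
    · exact (hh.comp (hm (fun t => 3 - 4 * t) (by fun_prop))).const_mul _
  have hexp : ∀ r : ℝ, ‖Complex.exp (-((r : ℝ) * Complex.I))‖ = 1 := by
    intro r
    have := Complex.norm_exp_ofReal_mul_I (-r)
    rwa [Complex.ofReal_neg, neg_mul] at this
  have hUn : ∀ z, ‖U z‖ = |if z 0 ≤ 1/2 then h (Function.update z 0 (4 * z 0 - 1)) else
      σ * h (Function.update z 0 (3 - 4 * z 0))| := by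
    intro z
    simp only [U]
    rw [norm_mul, hexp, one_mul, Complex.norm_real, Real.norm_eq_abs]
  have hUC : ∀ z, ‖U z‖ ≤ C := by
    intro z
    rw [hUn]
    split_ifs
    · exact hC _
    · rw [abs_mul, hσ, one_mul]; exact hC _
  have key := parseval_box (d+1) U hUm C hUC
  have zL : ∀ x ∈ cylDomain d, U (Function.update x 0 ((x 0 + 1)/4)) =
      Complex.exp (-((Real.pi * ((x 0 + 1)/4) : ℝ) * Complex.I)) * h x := by
    intro x hx
    have h1 : (x 0 + 1)/4 ≤ 1/2 := by linarith [hx.2.1]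
    have h2 : 4 * ((x 0 + 1)/4) - 1 = x 0 := by ring
    simp only [U, Function.update_self, Function.update_idem, h1, if_true, h2,
      Function.update_eq_self]
  have zR : ∀ x ∈ cylDomain d, U (Function.update x 0 ((3 - x 0)/4)) =
      Complex.exp (-((Real.pi * ((3 - x 0)/4) : ℝ) * Complex.I)) * (σ * h x) := by
    intro x hx
    have h1 : ¬ (3 - x 0)/4 ≤ 1/2 := by linarith [hx.2.1]
    have h2 : 3 - 4 * ((3 - x 0)/4) = x 0 := by ring
    simp only [U, Function.update_self, Function.update_idem, h1, if_false, h2,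
      Function.update_eq_self, Complex.ofReal_mul]
  have e1 : ∫ x in {x : Fin (d+1) → ℝ | ∀ i, x i ∈ Ioc (0:ℝ) 1}, ‖U x‖ ^ 2 =
      1/2 * ∫ x in cylDomain d, h x ^ 2 := by
    rw [fold_int d (fun x => ‖U x‖ ^ 2) (by fun_prop) (C ^ 2) (fun x => by
      rw [Real.norm_eq_abs, abs_of_nonneg (by positivity)]
      exact pow_le_pow_left₀ (norm_nonneg _) (hUC x) 2)]
    rw [setIntegral_congr_fun (g := fun x => 2 * h x ^ 2) (meas_cyl d), integral_const_mul,
      smul_eq_mul]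
    · ring
    · intro x hx
      simp only [zL x hx, zR x hx]
      rw [norm_mul, norm_mul, norm_mul, hexp, hexp, Complex.norm_real, Complex.norm_real,
        Real.norm_eq_abs, Real.norm_eq_abs, hσ, one_mul, one_mul, sq_abs]
      ring
  have e2 : ∀ n : Fin (d+1) → ℤ, ‖∫ x in {x : Fin (d+1) → ℝ | ∀ i, x i ∈ Ioc (0:ℝ) 1},
        Complex.exp (-(2 * Real.pi * Complex.I * ∑ i, n i * x i)) * U x‖ ^ 2 =
      1/4 * ((∫ x in cylDomain d, h x * u19W n δ₀ 0 x) ^ 2 +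
        (∫ x in cylDomain d, h x * u19W n δ₀ (Real.pi / 2) x) ^ 2) := by
    intro n
    rw [fold_int d _ (by fun_prop) C]
    swap
    · intro x
      rw [norm_mul]
      have : (-(2 * Real.pi * Complex.I * ((∑ i, n i * x i : ℝ) : ℂ)) : ℂ) =
        -((2 * Real.pi * (∑ i, n i * x i) : ℝ) * Complex.I) := by push_cast; ring
      rw [this, hexp, one_mul]
      exact hUC x
    have hW : ∀ δ₁, Integrable (fun x => ((h x * u19W n δ₀ δ₁ x : ℝ) : ℂ))
        (volume.restrict (cylDomain d)) := by
      intro δ₁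
      refine Integrable.ofReal (Integrable.of_bound (C := C) ?_ (Filter.Eventually.of_forall ?_))
      · exact (hh.mul (u19W_cont n δ₀ δ₁).measurable).aestronglyMeasurable
      · intro x
        change |h x * u19W n δ₀ δ₁ x| ≤ C
        rw [abs_mul]
        calc |h x| * |u19W n δ₀ δ₁ x| ≤ C * 1 :=
              mul_le_mul (hC x) (u19W_le _ _ _ _) (abs_nonneg _) hC0
          _ = C := mul_one C
    rw [setIntegral_congr_fun (g := fun x => κ * (((h x * u19W n δ₀ 0 x : ℝ) : ℂ) +
      ((h x * u19W n δ₀ (Real.pi / 2) x : ℝ) : ℂ) * Complex.I)) (meas_cyl d), integral_const_mul,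
      integral_add (hW _) ((hW _).mul_const _), integral_mul_const, integral_complex_ofReal,
      integral_complex_ofReal, norm_smul, norm_mul, hκ, mul_pow, mul_pow, ← Complex.normSq_eq_norm_sq,
      Complex.normSq_add_mul_I]
    · norm_num; ring
    · intro x hx
      simp only [zL x hx, zR x hx]
      rw [Fin.sum_univ_succ, Fin.sum_univ_succ]
      simp only [Function.update_self, Function.update_of_ne (Fin.succ_ne_zero _)]
      set u : ℝ := u19mu n 0 * (x 0 + 1) with hudef
      set S : ℝ := ∑ i : Fin d, (n i.succ : ℝ) * x i.succ with hS
      have hβ : u19beta n x = 2 * Real.pi * S := by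
        simp only [u19beta, hS, Finset.mul_sum, u19mu, Fin.cons_succ, mul_assoc]
      simp only [u19W, hβ, ← hudef]
      have hu' := hu u
      have a1 : (-(2 * Real.pi * Complex.I * ((n 0 * ((x 0 + 1)/4) + S : ℝ) : ℂ)) : ℂ) +
          -((Real.pi * ((x 0 + 1)/4) : ℝ) * Complex.I) =
          -(u * Complex.I) + -((2 * Real.pi * S : ℝ) * Complex.I) := by
        rw [hudef]; simp only [u19mu, Fin.cons_zero]; push_cast; ring
      have a2 : (-(2 * Real.pi * Complex.I * ((n 0 * ((3 - x 0)/4) + S : ℝ) : ℂ)) : ℂ) +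
          -((Real.pi * ((3 - x 0)/4) : ℝ) * Complex.I) =
          (u * Complex.I) + -((2 * Real.pi * S : ℝ) * Complex.I) + (- (Real.pi * Complex.I) +
            ((-n 0 : ℤ) : ℂ) * (2 * Real.pi * Complex.I)) := by
        rw [hudef]; simp only [u19mu, Fin.cons_zero]; push_cast; ring
      have a3 : Complex.exp (- (Real.pi * Complex.I) +
            ((-n 0 : ℤ) : ℂ) * (2 * Real.pi * Complex.I)) = -1 := by
        rw [Complex.exp_add, Complex.exp_int_mul_two_pi_mul_I, Complex.exp_neg, Complex.exp_pi_mul_I]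
        norm_num
      have a4 : Complex.exp (-((2 * Real.pi * S : ℝ) * Complex.I)) =
          (Real.cos (2 * Real.pi * S + 0) : ℝ) +
          (Real.cos (2 * Real.pi * S + Real.pi / 2) : ℝ) * Complex.I := by
        rw [add_zero, Real.cos_add_pi_div_two, ← neg_mul, Complex.exp_mul_I]
        simp
      rw [← mul_assoc, ← mul_assoc, ← Complex.exp_add, ← Complex.exp_add, a1, a2,
        Complex.exp_add _ (- (Real.pi * Complex.I) + _), a3, Complex.exp_add, Complex.exp_add, a4]
      push_cast at hu' ⊢
      linear_combination (h x : ℂ) * (Complex.cos (2 * Real.pi * S + 0) +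
        Complex.cos (2 * Real.pi * S + Real.pi / 2) * Complex.I) * hu'
  rw [e1] at key
  simp only [e2] at key
  have k2 := key.mul_left (4 : ℝ)
  have k3 : (4 : ℝ) * (1 / 2 * ∫ x in cylDomain d, h x ^ 2) = 2 * ∫ x in cylDomain d, h x ^ 2 := by
    ring
  rw [k3] at k2
  refine k2.congr_fun fun n => ?_
  ring

lemma parseval_cyl (d : ℕ) (δ₀ : ℝ) (hδ : δ₀ = -(Real.pi/2) ∨ δ₀ = -(Real.pi/2) + Real.pi/2)
    (h : (Fin (d+1) → ℝ) → ℝ) (hh : Measurable h) (C : ℝ) (hC : ∀ x, |h x| ≤ C) :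
    HasSum (fun n : Fin (d+1) → ℤ => (∫ x in cylDomain d, h x * u19W n δ₀ 0 x) ^ 2 +
        (∫ x in cylDomain d, h x * u19W n δ₀ (Real.pi / 2) x) ^ 2)
      (2 * ∫ x in cylDomain d, h x ^ 2) := by
  rcases hδ with rfl | rfl
  · refine parseval_cyl_aux d 1 _ (-2 * Complex.I) (by norm_num) (by simp) ?_ h hh C hC
    intro u
    rw [← sub_eq_add_neg, Real.cos_sub_pi_div_two, ← neg_mul, Complex.exp_mul_I, Complex.exp_mul_I]
    simp
    ring
  · refine parseval_cyl_aux d (-1) _ 2 (by norm_num) (by simp) ?_ h hh C hC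
    intro u
    rw [neg_add_cancel, add_zero, ← neg_mul, Complex.exp_mul_I, Complex.exp_mul_I]
    simp
    ring


lemma Ioo_int {s : ℝ} (hs : 0 ≤ s) (f : ℝ → ℝ) : ∫ t in Ioo 0 s, f t = ∫ t in (0:ℝ)..s, f t := by
  rw [intervalIntegral.integral_of_le hs, integral_Ioc_eq_integral_Ioo]

lemma gron19 (T K M : ℝ) (y : ℝ → ℝ) (hy : Measurable y) (h0 : ∀ s, 0 ≤ y s)
    (hM : ∀ s, y s ≤ M) (hK : 0 ≤ K)
    (h : ∀ᵐ s ∂(volume.restrict (Ioo 0 T)), y s ≤ K * ∫ t in Ioo 0 s, y t) :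
    ∀ᵐ s ∂(volume.restrict (Ioo 0 T)), y s = 0 := by
  have hyi : ∀ a b : ℝ, IntervalIntegrable y volume a b := by
    intro a b
    rw [intervalIntegrable_iff]
    refine Measure.integrableOn_of_bounded (M := M) ?_ hy.aestronglyMeasurable
      (Filter.Eventually.of_forall fun x => ?_)
    · simp [uIoc]
    · rw [Real.norm_eq_abs, abs_of_nonneg (h0 x)]; exact hM x
  set Y : ℝ → ℝ := fun s => ∫ t in (0:ℝ)..s, y t with hY
  have hYc : Continuous Y := intervalIntegral.continuous_primitive hyi 0
  have hY0 : ∀ s, 0 ≤ s → 0 ≤ Y s := fun s hs =>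
    intervalIntegral.integral_nonneg hs fun u _ => h0 u
  set Z : ℝ → ℝ := fun s => ∫ t in (0:ℝ)..s, Y t with hZ
  have hZd : ∀ s, HasDerivAt Z (Y s) s := fun s =>
    intervalIntegral.integral_hasDerivAt_right (hYc.intervalIntegrable _ _)
      hYc.aestronglyMeasurable.stronglyMeasurableAtFilter hYc.continuousAt
  have hZ0 : ∀ s, 0 ≤ s → 0 ≤ Z s := fun s hs =>
    intervalIntegral.integral_nonneg hs fun u hu => hY0 u hu.1
  have hYZ : ∀ s, 0 ≤ s → s ≤ T → Y s ≤ K * Z s := by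
    intro s hs hsT
    simp only [hZ]
    rw [← intervalIntegral.integral_const_mul]
    simp only [hY]
    rw [← Ioo_int hs, ← Ioo_int hs]
    refine integral_mono_ae ?_ ?_ ?_
    · exact ((intervalIntegrable_iff_integrableOn_Ioo_of_le hs).1 (hyi 0 s))
    · exact ((intervalIntegrable_iff_integrableOn_Ioo_of_le hs).1
        ((hYc.const_mul K).intervalIntegrable 0 s))
    · have := ae_restrict_of_ae_restrict_of_subset (Ioo_subset_Ioo_right hsT) h
      filter_upwards [this, ae_restrict_mem measurableSet_Ioo] with t ht htm
      rwa [Ioo_int htm.1.le] at ht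
  have hZz : ∀ s ∈ Icc (0:ℝ) T, ‖Z s‖ ≤ gronwallBound 0 K 0 (s - 0) := by
    refine norm_le_gronwallBound_of_norm_deriv_right_le (f' := Y) ?_ ?_ ?_ ?_
    · exact fun s _ => (hZd s).continuousAt.continuousWithinAt
    · exact fun s _ => (hZd s).hasDerivWithinAt
    · simp [hZ]
    · intro s hs
      rw [Real.norm_eq_abs, Real.norm_eq_abs, abs_of_nonneg (hY0 s hs.1), abs_of_nonneg (hZ0 s hs.1),
        add_zero]
      exact hYZ s hs.1 hs.2.le
  filter_upwards [h, ae_restrict_mem measurableSet_Ioo] with s hs hsm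
  have h1 := hZz s ⟨hsm.1.le, hsm.2.le⟩
  rw [gronwallBound_ε0, zero_mul, Real.norm_eq_abs, abs_of_nonneg (hZ0 s hsm.1.le)] at h1
  have h2 := hYZ s hsm.1.le hsm.2.le
  have h3 : Y s ≤ 0 := h2.trans (mul_nonpos_of_nonneg_of_nonpos hK h1)
  rw [Ioo_int hsm.1.le] at hs
  exact le_antisymm (hs.trans (mul_nonpos_of_nonneg_of_nonpos hK h3)) (h0 s)

lemma energy19 {ι : Type*} [Fintype ι] (s Mb : ℝ) (hs : 0 ≤ s) (μ : ι → ℝ) (B : ι → ℝ → ℝ)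
    (hB : ∀ k, Measurable (B k)) (hMb : ∀ k t, |B k t| ≤ Mb) :
    (∫ t in Ioo 0 s, Real.exp (-((∑ k, μ k ^ 2) * (s - t))) * ∑ k, μ k * B k t) ^ 2 ≤
      ∫ t in Ioo 0 s, ∑ k, B k t ^ 2 := by
  set l := ∑ k, μ k ^ 2 with hl
  have hl0 : 0 ≤ l := Finset.sum_nonneg fun k _ => sq_nonneg _
  set X := ∫ t in Ioo 0 s, Real.exp (-(l * (s - t))) * ∑ k, μ k * B k t with hX
  have iB : ∀ k, Integrable (B k) (volume.restrict (Ioo 0 s)) := fun k =>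
    Integrable.of_bound (hB k).aestronglyMeasurable Mb (Filter.Eventually.of_forall (hMb k))
  have iB2 : Integrable (fun t => ∑ k, B k t ^ 2) (volume.restrict (Ioo 0 s)) := by
    refine integrable_finsetSum _ fun k _ => ?_
    refine Integrable.of_bound ((hB k).pow_const 2).aestronglyMeasurable (Mb ^ 2)
      (Filter.Eventually.of_forall fun t => ?_)
    rw [Real.norm_eq_abs, abs_pow]
    exact pow_le_pow_left₀ (abs_nonneg _) (hMb k t) 2
  have iX : Integrable (fun t => Real.exp (-(l * (s - t))) * ∑ k, μ k * B k t)
      (volume.restrict (Ioo 0 s)) := by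
    refine Integrable.bdd_mul (c := 1) (integrable_finsetSum _ fun k _ => (iB k).const_mul _)
      (by fun_prop) ?_
    filter_upwards [ae_restrict_mem measurableSet_Ioo] with t ht
    rw [Real.norm_eq_abs, Real.abs_exp, Real.exp_le_one_iff]
    have : 0 ≤ l * (s - t) := mul_nonneg hl0 (by linarith [ht.2])
    linarith
  have hE : ∫ t in Ioo 0 s, l * Real.exp (-(l * (s - t))) ^ 2 ≤ 1 := by
    rw [Ioo_int hs]
    rw [intervalIntegral.integral_eq_sub_of_hasDerivAt
      (f := fun t => (1/2) * Real.exp (-(l * (s - t))) ^ 2)]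
    · simp only [sub_self, mul_zero, neg_zero, Real.exp_zero]
      have := sq_nonneg (Real.exp (-(l * (s - 0))))
      linarith
    · intro t _
      have h1 : HasDerivAt (fun t => Real.exp (-(l * (s - t))))
          (Real.exp (-(l * (s - t))) * l) t := by
        have h2 : HasDerivAt (fun t => -(l * (s - t))) l t := by
          have := (((hasDerivAt_id t).const_sub s).const_mul l).fun_neg
          simpa using this
        exact h2.exp
      have := (h1.pow 2).const_mul (1/2)
      refine this.congr_deriv ?_
      push_cast; ring
    · exact Continuous.intervalIntegrable (by fun_prop) _ _
  have iE : Integrable (fun t => l * Real.exp (-(l * (s - t))) ^ 2) (volume.restrict (Ioo 0 s)) :=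
    (Continuous.integrableOn_Icc (by fun_prop)).mono_set Ioo_subset_Icc_self
  have main : ∫ t in Ioo 0 s, (2 * X) * (Real.exp (-(l * (s - t))) * ∑ k, μ k * B k t) ≤
      ∫ t in Ioo 0 s, (X ^ 2 * (l * Real.exp (-(l * (s - t))) ^ 2) + ∑ k, B k t ^ 2) := by
    refine integral_mono (iX.const_mul _) ((iE.const_mul _).add iB2) fun t => ?_
    simp only
    generalize Real.exp (-(l * (s - t))) = e
    have r1 : 2 * X * (e * ∑ k, μ k * B k t) = ∑ k, 2 * X * (e * (μ k * B k t)) := by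
      rw [Finset.mul_sum, Finset.mul_sum]
    have r2 : X ^ 2 * (l * e ^ 2) + ∑ k, B k t ^ 2 =
        ∑ k, (X ^ 2 * (μ k ^ 2 * e ^ 2) + B k t ^ 2) := by
      rw [Finset.sum_add_distrib, ← Finset.mul_sum, ← Finset.sum_mul]
    rw [r1, r2]
    refine Finset.sum_le_sum fun k _ => ?_
    nlinarith [sq_nonneg (X * e * μ k - B k t)]
  rw [integral_const_mul, integral_add (iE.const_mul _) iB2, integral_const_mul, ← hX] at main
  nlinarith [sq_nonneg X]

lemma dual19 (T l Mc Mf : ℝ) (hT : 0 < T) (hl : 0 ≤ l) (c f : ℝ → ℝ) (hc : Measurable c)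
    (hf : Measurable f) (hMc : ∀ t, |c t| ≤ Mc) (hMf : ∀ t, |f t| ≤ Mf)
    (hyp : ∀ a : ℝ → ℝ, ContDiff ℝ 2 a → a T = 0 →
      ∫ t in Ioo 0 T, (c t * (deriv a t - l * a t) + f t * a t) = 0) :
    ∀ᵐ s ∂(volume.restrict (Ioo 0 T)), c s = ∫ t in Ioo 0 s, Real.exp (-(l * (s - t))) * f t := by
  set ν := (volume : Measure ℝ).restrict (Ioo 0 T) with hν
  let k : ℝ → ℝ → ℝ := fun s t => if t < s then Real.exp (-(l * (s - t))) else 0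
  have hkm : Measurable (fun p : ℝ × ℝ => k p.1 p.2) :=
    Measurable.ite (measurableSet_lt (by fun_prop) (by fun_prop)) (by fun_prop) (by fun_prop)
  have hk1 : ∀ s t, |k s t| ≤ 1 := by
    intro s t
    simp only [k]
    split_ifs with h
    · rw [Real.abs_exp, Real.exp_le_one_iff]
      have : 0 ≤ l * (s - t) := mul_nonneg hl (by linarith)
      linarith
    · simp
  have ic : Integrable c ν :=
    Integrable.of_bound hc.aestronglyMeasurable Mc (Filter.Eventually.of_forall hMc)
  have iF : Integrable f ν :=
    Integrable.of_bound hf.aestronglyMeasurable Mf (Filter.Eventually.of_forall hMf)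
  let C : ℝ → ℝ := fun s => ∫ t, k s t * f t ∂ν
  have iC : Integrable C ν := by
    have : Integrable (fun p : ℝ × ℝ => k p.1 p.2 * f p.2) (ν.prod ν) :=
      Integrable.bdd_mul (c := 1) (iF.comp_snd ν) hkm.aestronglyMeasurable
        (Filter.Eventually.of_forall fun p => hk1 _ _)
    exact this.integral_prod_left
  have hae : ∀ᵐ x, x ∈ Ioo 0 T → c x - C x = 0 := by
    refine isOpen_Ioo.ae_eq_zero_of_integral_contDiff_smul_eq_zero (f := fun x => c x - C x)
      (IntegrableOn.locallyIntegrableOn (ic.sub iC)) ?_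
    intro θ hθ hθc hθs
    have hθcont : Continuous θ := hθ.continuous
    obtain ⟨Mθ, hMθ⟩ := hθcont.bounded_above_of_compact_support hθc
    have iθ : Integrable θ ν := (hθcont.integrable_of_hasCompactSupport hθc).restrict
    rw [← setIntegral_eq_integral_of_forall_compl_eq_zero (s := Ioo 0 T)]
    swap
    · intro x hx
      have : θ x = 0 := image_eq_zero_of_notMem_tsupport fun h => hx (hθs h)
      simp [this]
    let P : ℝ → ℝ := fun t => ∫ s in (0:ℝ)..t, Real.exp (-(l * s)) * θ s
    have hPc : Continuous (fun s => Real.exp (-(l * s)) * θ s) := by fun_prop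
    have hPd : ∀ t, HasDerivAt P (Real.exp (-(l * t)) * θ t) t := fun t =>
      intervalIntegral.integral_hasDerivAt_right (hPc.intervalIntegrable _ _)
        hPc.aestronglyMeasurable.stronglyMeasurableAtFilter hPc.continuousAt
    have hP2 : ContDiff ℝ 2 P := by
      rw [show (2 : WithTop ℕ∞) = 1 + 1 by norm_num, contDiff_succ_iff_deriv]
      refine ⟨fun t => (hPd t).differentiableAt, by simp, ?_⟩
      have : deriv P = fun t => Real.exp (-(l * t)) * θ t := funext fun t => (hPd t).deriv
      rw [this]
      have h1 : ContDiff ℝ 1 θ := hθ.of_le (by exact_mod_cast le_top)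
      fun_prop
    let a : ℝ → ℝ := fun t => Real.exp (l * t) * (P t - P T)
    have ha2 : ContDiff ℝ 2 a := by
      have : ContDiff ℝ 2 (fun t : ℝ => Real.exp (l * t)) := by fun_prop
      exact this.mul (hP2.sub contDiff_const)
    have had : ∀ t, deriv a t = l * a t + θ t := by
      intro t
      have h1 : HasDerivAt (fun t : ℝ => Real.exp (l * t)) (Real.exp (l * t) * l) t := by
        have h2 : HasDerivAt (fun t : ℝ => l * t) l t := by
          simpa using (hasDerivAt_id t).const_mul l
        exact h2.exp
      have := (h1.mul ((hPd t).sub_const (P T))).deriv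
      change deriv a t = _ at this
      rw [this]
      have h3 : Real.exp (l * t) * Real.exp (-(l * t)) = 1 := by
        rw [← Real.exp_add]; simp
      simp only [a]
      linear_combination θ t * h3
    have hat : ∀ t ∈ Ioo 0 T, a t = -∫ s, k s t * θ s ∂ν := by
      intro t ht
      have h1 : ∫ s, k s t * θ s ∂ν = ∫ s in t..T, Real.exp (l * t) * (Real.exp (-(l * s)) * θ s) := by
        rw [intervalIntegral.integral_of_le ht.2.le, integral_Ioc_eq_integral_Ioo, hν,
          ← integral_indicator measurableSet_Ioo, ← integral_indicator measurableSet_Ioo]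
        refine integral_congr_ae (Filter.Eventually.of_forall fun s => ?_)
        simp only [indicator, mem_Ioo, k]
        by_cases h1 : t < s <;> by_cases h2 : s < T
        · have : 0 < s := ht.1.trans h1
          simp only [h1, h2, this, and_self, if_true]
          rw [← mul_assoc, ← Real.exp_add]
          congr 2; ring
        · simp [h2]
        · simp [h1]
        · simp [h2]
      rw [h1, intervalIntegral.integral_const_mul]
      have h2 : P t + ∫ s in t..T, Real.exp (-(l * s)) * θ s = P T :=
        intervalIntegral.integral_add_adjacent_intervals (hPc.intervalIntegrable _ _)
          (hPc.intervalIntegrable _ _)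
      simp only [a]
      linear_combination Real.exp (l * t) * h2
    have h0 := hyp a ha2 (by simp [a])
    have ia : Integrable (fun t => f t * a t) ν := by
      refine Integrable.bdd_mul (c := Mf) ?_ hf.aestronglyMeasurable
        (Filter.Eventually.of_forall hMf)
      exact (ha2.continuous.integrableOn_Icc).mono_set Ioo_subset_Icc_self
    have icθ : Integrable (fun t => c t * θ t) ν :=
      iθ.bdd_mul hc.aestronglyMeasurable (Filter.Eventually.of_forall hMc)
    have iCθ : Integrable (fun t => C t * θ t) ν := by
      have := iC.bdd_mul hθcont.aestronglyMeasurable (Filter.Eventually.of_forall hMθ)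
      exact this.congr (Filter.Eventually.of_forall fun t => mul_comm _ _)
    have e0 : ∫ t, c t * θ t ∂ν + ∫ t, f t * a t ∂ν = 0 := by
      rw [← integral_add icθ ia, ← h0]
      refine integral_congr_ae (Filter.Eventually.of_forall fun t => ?_)
      simp only [had]
      ring
    have e1 : ∫ t, f t * a t ∂ν = -∫ t, ∫ s, f t * (k s t * θ s) ∂ν ∂ν := by
      rw [← integral_neg]
      refine setIntegral_congr_fun measurableSet_Ioo fun t ht => ?_
      simp only [hat t ht, integral_const_mul]
      ring
    have isw : Integrable (fun p : ℝ × ℝ => f p.1 * (k p.2 p.1 * θ p.2)) (ν.prod ν) := by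
      have h1 : Integrable (fun p : ℝ × ℝ => k p.2 p.1 * θ p.2) (ν.prod ν) :=
        Integrable.bdd_mul (c := 1) (iθ.comp_snd ν)
          (hkm.comp measurable_swap).aestronglyMeasurable
          (Filter.Eventually.of_forall fun p => hk1 _ _)
      exact h1.bdd_mul (c := Mf) (hf.comp measurable_fst).aestronglyMeasurable
        (Filter.Eventually.of_forall fun p => hMf _)
    have e2 : ∫ t, ∫ s, f t * (k s t * θ s) ∂ν ∂ν = ∫ s, C s * θ s ∂ν := by
      rw [integral_integral_swap isw]
      refine integral_congr_ae (Filter.Eventually.of_forall fun s => ?_)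
      simp only [C]
      rw [← integral_mul_const]
      refine integral_congr_ae (Filter.Eventually.of_forall fun t => ?_)
      simp only
      ring
    rw [e1, e2] at e0
    have e3 : ∫ x in Ioo 0 T, θ x • (c x - C x) = ∫ t, c t * θ t ∂ν - ∫ t, C t * θ t ∂ν := by
      rw [← integral_sub icθ iCθ]
      refine integral_congr_ae (Filter.Eventually.of_forall fun s => ?_)
      simp only [smul_eq_mul]
      ring
    rw [e3]
    linarith
  rw [hν, ae_restrict_iff' measurableSet_Ioo]
  filter_upwards [hae] with s hs hsm
  rw [sub_eq_zero.1 (hs hsm)]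
  simp only [C, k, hν]
  rw [← integral_indicator measurableSet_Ioo, ← integral_indicator measurableSet_Ioo]
  refine integral_congr_ae (Filter.Eventually.of_forall fun t => ?_)
  simp only [indicator, mem_Ioo]
  by_cases h1 : t < s <;> by_cases h2 : 0 < t
  · simp [h1, h2, h1.trans hsm.2]
  · simp [h2]
  · simp [h1]
  · simp [h2]

lemma u19W_smooth {d : ℕ} (n : Fin (d+1) → ℤ) (δ₀ δ₁ : ℝ) (m) : ContDiff ℝ m (u19W n δ₀ δ₁) := by
  unfold u19W u19beta; fun_prop

lemma u19beta_add {d : ℕ} (n : Fin (d+1) → ℤ) (x y : Fin (d+1) → ℝ) :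
    u19beta n (x + y) = u19beta n x + u19beta n y := by
  simp [u19beta, mul_add, Finset.sum_add_distrib]

lemma u19beta_smul {d : ℕ} (n : Fin (d+1) → ℤ) (t : ℝ) (y : Fin (d+1) → ℝ) :
    u19beta n (t • y) = t * u19beta n y := by
  simp only [u19beta, Finset.mul_sum, Pi.smul_apply, smul_eq_mul]
  exact Finset.sum_congr rfl fun j _ => by ring

lemma u19beta_single0 {d : ℕ} (n : Fin (d+1) → ℤ) : u19beta n (Pi.single 0 1) = 0 := by
  simp [u19beta]

lemma u19beta_singleS {d : ℕ} (n : Fin (d+1) → ℤ) (j : Fin d) :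
    u19beta n (Pi.single j.succ 1) = u19mu n j.succ := by
  simp only [u19beta]
  rw [Finset.sum_eq_single j]
  · simp
  · intro b _ hb
    rw [Pi.single_eq_of_ne]; · simp
    · simpa using hb
  · simp

lemma u19W_fd {d : ℕ} (n : Fin (d+1) → ℤ) (δ₀ δ₁ : ℝ) (x v : Fin (d+1) → ℝ) :
    fderiv ℝ (u19W n δ₀ δ₁) x v = u19mu n 0 * v 0 * u19W n (δ₀ + Real.pi/2) δ₁ x
      + u19beta n v * u19W n δ₀ (δ₁ + Real.pi/2) x := by
  have hd : DifferentiableAt ℝ (u19W n δ₀ δ₁) x :=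
    (u19W_smooth n δ₀ δ₁ 1).differentiable (by norm_num) x
  rw [← hd.lineDeriv_eq_fderiv, lineDeriv]
  have e : (fun t : ℝ => u19W n δ₀ δ₁ (x + t • v)) = fun t : ℝ =>
      Real.cos (u19mu n 0 * (x 0 + t * v 0 + 1) + δ₀)
        * Real.cos (u19beta n x + t * u19beta n v + δ₁) := by
    funext t
    simp [u19W, u19beta_add, u19beta_smul]
  rw [e]
  have h1 : HasDerivAt (fun t : ℝ => u19mu n 0 * (x 0 + t * v 0 + 1) + δ₀) (u19mu n 0 * v 0) 0 := by
    have := (((((hasDerivAt_id (0:ℝ)).mul_const (v 0)).const_add (x 0)).add_const 1).const_mul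
      (u19mu n 0)).add_const δ₀
    exact this.congr_deriv (by simp)
  have h2 : HasDerivAt (fun t : ℝ => u19beta n x + t * u19beta n v + δ₁) (u19beta n v) 0 := by
    have := (((hasDerivAt_id (0:ℝ)).mul_const (u19beta n v)).const_add (u19beta n x)).add_const δ₁
    exact this.congr_deriv (by simp)
  refine (h1.cos.mul h2.cos).deriv.trans ?_
  simp only [u19W, ← add_assoc, Real.cos_add_pi_div_two]
  simp
  ring

lemma u19W_pi {d : ℕ} (n : Fin (d+1) → ℤ) (δ₀ δ₁ : ℝ) (x : Fin (d+1) → ℝ) :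
    u19W n δ₀ (δ₁ + Real.pi/2 + Real.pi/2) x = - u19W n δ₀ δ₁ x := by
  simp only [u19W, ← add_assoc, Real.cos_add_pi_div_two, Real.sin_add_pi_div_two]; ring

lemma u19W_pi0 {d : ℕ} (n : Fin (d+1) → ℤ) (δ₀ δ₁ : ℝ) (x : Fin (d+1) → ℝ) :
    u19W n (δ₀ + Real.pi/2 + Real.pi/2) δ₁ x = - u19W n δ₀ δ₁ x := by
  simp only [u19W, ← add_assoc, Real.cos_add_pi_div_two, Real.sin_add_pi_div_two]; ring

/-- shifted modes appearing in the gradient. -/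
noncomputable def u19V {d : ℕ} (n : Fin (d+1) → ℤ) (δ₁ : ℝ) (k : Fin (d+1)) : (Fin (d+1) → ℝ) → ℝ :=
  if k = 0 then u19W n (-(Real.pi/2) + Real.pi/2) δ₁ else u19W n (-(Real.pi/2)) (δ₁ + Real.pi/2)

lemma u19V_cont {d : ℕ} (n : Fin (d+1) → ℤ) (δ₁ : ℝ) (k) : Continuous (u19V n δ₁ k) := by
  unfold u19V; split_ifs <;> exact u19W_cont _ _ _

lemma u19V_le {d : ℕ} (n : Fin (d+1) → ℤ) (δ₁ : ℝ) (k x) : |u19V n δ₁ k x| ≤ 1 := by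
  unfold u19V; split_ifs <;> exact u19W_le _ _ _ _

lemma u19W_grad {d : ℕ} (n : Fin (d+1) → ℤ) (δ₁ : ℝ) (k : Fin (d+1)) (x : Fin (d+1) → ℝ) :
    fderiv ℝ (u19W n (-(Real.pi/2)) δ₁) x (Pi.single k 1) = u19mu n k * u19V n δ₁ k x := by
  rw [u19W_fd]
  refine Fin.cases ?_ (fun j => ?_) k
  · simp [u19beta_single0, u19V]
  · simp [u19beta_singleS, u19V]

lemma u19W_grad2 {d : ℕ} (n : Fin (d+1) → ℤ) (δ₁ : ℝ) (k : Fin (d+1)) (x : Fin (d+1) → ℝ) :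
    fderiv ℝ (fun y => u19mu n k * u19V n δ₁ k y) x (Pi.single k 1) =
      - u19mu n k ^ 2 * u19W n (-(Real.pi/2)) δ₁ x := by
  have hd : DifferentiableAt ℝ (u19V n δ₁ k) x := by
    unfold u19V; split_ifs <;> exact (u19W_smooth _ _ _ 1).differentiable (by norm_num) x
  rw [fderiv_const_mul hd]
  simp only [_root_.smul_apply, smul_eq_mul]
  have key : fderiv ℝ (u19V n δ₁ k) x (Pi.single k 1)
      = - u19mu n k * u19W n (-(Real.pi/2)) δ₁ x := by
    revert hd
    refine Fin.cases ?_ (fun j => ?_) k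
    · intro _
      simp only [u19V, if_true]
      rw [u19W_fd, u19W_pi0]; simp [u19beta_single0]
    · intro _
      simp only [u19V, Fin.succ_ne_zero, if_false]
      rw [u19W_fd, u19W_pi]; simp [u19beta_singleS]
  rw [key]; ring

lemma u19W_left {d : ℕ} (n : Fin (d+1) → ℤ) (δ₁ : ℝ) (x : Fin (d+1) → ℝ) (hx : x 0 = -1) :
    u19W n (-(Real.pi/2)) δ₁ x = 0 := by
  simp [u19W, hx]

lemma u19V_right {d : ℕ} (n : Fin (d+1) → ℤ) (δ₁ : ℝ) (x : Fin (d+1) → ℝ) (hx : x 0 = 1) :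
    u19V n δ₁ 0 x = 0 := by
  simp only [u19V, if_true, u19W, hx]
  have : Real.cos (u19mu n 0 * (1 + 1) + (-(Real.pi/2) + Real.pi/2)) = 0 := by
    rw [Real.cos_eq_zero_iff]
    exact ⟨n 0, by simp [u19mu]; ring⟩
  rw [this, zero_mul]

lemma u19W_per {d : ℕ} (n : Fin (d+1) → ℤ) (δ₀ δ₁ : ℝ) (x : Fin (d+1) → ℝ) (i : Fin (d+1))
    (hi : i ≠ 0) : u19W n δ₀ δ₁ (x + Pi.single i 1) = u19W n δ₀ δ₁ x := by
  obtain ⟨j, rfl⟩ := Fin.exists_succ_eq.2 hi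
  simp only [u19W, u19beta_add, u19beta_singleS]
  have : u19beta n x + u19mu n j.succ + δ₁ = (u19beta n x + δ₁) + (n j.succ) * (2 * Real.pi) := by
    simp [u19mu]; ring
  rw [this, Real.cos_add_int_mul_two_pi]
  simp

lemma intS19 (d : ℕ) (T : ℝ) (f r : ℝ × (Fin (d+1) → ℝ) → ℝ) (hf : Continuous f)
    (hr : Measurable r) (C : ℝ) (hC : ∀ p, |r p| ≤ C) :
    Integrable (fun p => r p * f p) (volume.restrict (Ioo 0 T ×ˢ cylDomain d)) := by
  have h1 : IntegrableOn f (Icc ((0:ℝ), fun _ => (-1:ℝ)) (T, fun _ => (1:ℝ))) volume :=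
    hf.integrableOn_Icc
  have h2 : Integrable f (volume.restrict (Ioo 0 T ×ˢ cylDomain d)) := by
    refine h1.mono_set ?_
    rintro ⟨t, x⟩ ⟨ht, hx⟩
    refine ⟨⟨ht.1.le, fun i => ?_⟩, ⟨ht.2.le, fun i => ?_⟩⟩
    · by_cases hi : i = 0
      · subst hi; exact hx.1.le
      · exact (by norm_num : (-1:ℝ) ≤ 0).trans (hx.2.2 i hi).1
    · by_cases hi : i = 0
      · subst hi; exact hx.2.1.le
      · exact (hx.2.2 i hi).2.le
  exact h2.bdd_mul (c := C) hr.aestronglyMeasurable (Filter.Eventually.of_forall hC)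

/-- gradient of the perturbation. -/
noncomputable def u19D {d : ℕ} (E : Fin (d + 1) → Fin 2 → ℝ)
    (H : ℝ → (Fin (d + 1) → ℝ) → Fin 2 → ℝ) (k : Fin (d+1)) (j : Fin 2)
    (p : ℝ × (Fin (d+1) → ℝ)) : ℝ :=
  E k j + 2 * fderiv ℝ (fun y => H p.1 y j) p.2 (Pi.single k 1)

lemma u19D_cont {d : ℕ} (E : Fin (d + 1) → Fin 2 → ℝ)
    (H : ℝ → (Fin (d + 1) → ℝ) → Fin 2 → ℝ) (hH : TestBdry d H) (k j) :
    Continuous (u19D E H k j) := by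
  have h : ContDiff ℝ 2 (fun p : ℝ × (Fin (d + 1) → ℝ) => H p.1 p.2) := hH.1
  have h1 : ContDiff ℝ 2 (fun p : ℝ × (Fin (d + 1) → ℝ) => H p.1 p.2 j) := by
    exact (contDiff_pi.1 h) j
  have h2 : ContDiff ℝ 1 (fun p : ℝ × (Fin (d + 1) → ℝ) => fderiv ℝ (fun y => H p.1 y j) p.2) := by
    refine ContDiff.fderiv (m := 2) (n := 1) (f := fun (p : ℝ × (Fin (d + 1) → ℝ)) y => H p.1 y j)
      ?_ contDiff_snd (by norm_num)
    exact h1.comp ((contDiff_fst.comp contDiff_fst).prodMk contDiff_snd)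
  have h3 := h2.continuous.clm_apply (continuous_const (y := (Pi.single k 1 : Fin (d+1) → ℝ)))
  unfold u19D
  exact continuous_const.add (continuous_const.mul h3)

lemma sigma_bd (a : Fin 2 → ℝ) (h0 : a 0 ∈ Icc (-1:ℝ) 1) (h1 : a 1 ∈ Icc (0:ℝ) 1) (i j) :
    |SigmaBC a i j| ≤ 4 := by
  obtain ⟨h0, h0'⟩ := h0
  obtain ⟨h1, h1'⟩ := h1
  rw [abs_le]
  fin_cases i <;> fin_cases j <;> simp [SigmaBC] <;> constructor <;> nlinarith

lemma sigma_meas {d : ℕ} (ρ : ℝ → (Fin (d + 1) → ℝ) → Fin 2 → ℝ)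
    (hm : Measurable (fun p : ℝ × (Fin (d + 1) → ℝ) => ρ p.1 p.2)) (i j) :
    Measurable (fun p : ℝ × (Fin (d + 1) → ℝ) => SigmaBC (ρ p.1 p.2) i j) := by
  have m0 : Measurable (fun p : ℝ × (Fin (d + 1) → ℝ) => ρ p.1 p.2 0) := (measurable_pi_iff.1 hm) 0
  have m1 : Measurable (fun p : ℝ × (Fin (d + 1) → ℝ) => ρ p.1 p.2 1) := (measurable_pi_iff.1 hm) 1
  fin_cases i <;> fin_cases j <;> simp [SigmaBC] <;> fun_prop

lemma weak19 (d : ℕ) (T : ℝ)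
    (E : Fin (d + 1) → Fin 2 → ℝ)
    (H : ℝ → (Fin (d + 1) → ℝ) → Fin 2 → ℝ) (hH : TestBdry d H)
    (b γ : (Fin (d + 1) → ℝ) → Fin 2 → ℝ) (n : Fin (d+1) → ℤ) (δ : ℝ) (i : Fin 2)
    (a : ℝ → ℝ) (ha : ContDiff ℝ 2 a) (haT : a T = 0) :
    ∃ R : ℝ, ∀ ρ g τ, IsWeakSolutionBC d T E H b γ ρ g τ →
      (Integrable (fun p : ℝ × (Fin (d + 1) → ℝ) =>
          ρ p.1 p.2 i * ((deriv a p.1 - (∑ k, u19mu n k ^ 2) * a p.1)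
            * u19W n (-(Real.pi/2)) δ p.2)
          + ∑ k, ∑ j, SigmaBC (ρ p.1 p.2) i j *
            (1/2 * (u19D E H k j p * (a p.1 * (u19mu n k * u19V n δ k p.2)))))
        (volume.restrict (Ioo 0 T ×ˢ cylDomain d))) ∧
      ∫ p in Ioo 0 T ×ˢ cylDomain d,
          (ρ p.1 p.2 i * ((deriv a p.1 - (∑ k, u19mu n k ^ 2) * a p.1)
            * u19W n (-(Real.pi/2)) δ p.2)
          + ∑ k, ∑ j, SigmaBC (ρ p.1 p.2) i j *
            (1/2 * (u19D E H k j p * (a p.1 * (u19mu n k * u19V n δ k p.2))))) = R := by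
  set v := u19W n (-(Real.pi/2)) δ with hv
  set e : Fin 2 → ℝ := fun j => if j = i then 1 else 0 with he
  set G : ℝ → (Fin (d+1) → ℝ) → Fin 2 → ℝ := fun t x j => e j * (a t * v x) with hG
  have hvs : ContDiff ℝ 2 v := u19W_smooth _ _ _ _
  have hvd : Differentiable ℝ v := hvs.differentiable (by norm_num)
  have had : Differentiable ℝ a := ha.differentiable (by norm_num)
  have hac : Continuous (deriv a) := ha.continuous_deriv (by norm_num)
  have hGt : TestBdry d G := by
    refine ⟨?_, ?_, ?_⟩
    · rw [contDiff_pi]; intro j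
      exact contDiff_const.mul ((ha.comp contDiff_fst).mul (hvs.comp contDiff_snd))
    · intro t x j hj; funext l; simp only [hG, hv, u19W_per _ _ _ _ _ hj]
    · intro t x hx; funext l; simp [hG, hv, u19W_left _ _ _ hx]
  have d1 : ∀ p : ℝ × (Fin (d+1) → ℝ), ∀ j, deriv (fun s => G s p.2 j) p.1
      = e j * (deriv a p.1 * v p.2) := by
    intro p j
    simp only [hG]
    exact (((had p.1).hasDerivAt.mul_const (v p.2)).const_mul (e j)).deriv
  have d2 : ∀ t x k j, fderiv ℝ (fun y => G t y j) x (Pi.single k 1)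
      = e j * (a t * (u19mu n k * u19V n δ k x)) := by
    intro t x k j
    simp only [hG]
    rw [fderiv_const_mul ((hvd x).const_mul _), fderiv_const_mul (hvd x)]
    simp only [_root_.smul_apply, smul_eq_mul]
    rw [hv, u19W_grad]
  have d3 : ∀ t x k j, fderiv ℝ (fun y => fderiv ℝ (fun z => G t z j) y (Pi.single k 1)) x
        (Pi.single k 1) = e j * (a t * (- u19mu n k ^ 2 * v x)) := by
    intro t x k j
    simp only [d2]
    have hd : Differentiable ℝ (fun y => u19mu n k * u19V n δ k y) := by
      have : Differentiable ℝ (u19V n δ k) := by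
        unfold u19V; split_ifs <;> exact (u19W_smooth _ _ _ 1).differentiable (by norm_num)
      exact this.const_mul _
    rw [fderiv_const_mul ((hd x).const_mul _), fderiv_const_mul (hd x)]
    simp only [_root_.smul_apply, smul_eq_mul]
    rw [u19W_grad2]
  refine ⟨-(∫ x in cylDomain d, ∑ i : Fin 2, γ x i * G 0 x i) - (1 / 2) * (∫ p in (Set.Ioo 0 T ×ˢ cylDomain d),
          ∑ i : Fin 2, b p.2 i *
            fderiv ℝ (fun y => G p.1 y i) (Function.update p.2 0 (-1)) (Pi.single 0 1)), ?_⟩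
  intro ρ g τ h
  obtain ⟨hm, hbd, -, -, -, -, -, -, hw⟩ := h
  have hw := hw G hGt
  have z1 : (∫ x in cylDomain d, ∑ i : Fin 2, ρ T x i * G T x i) = 0 := by simp [hG, haT]
  have z2 : (∫ p in (Set.Ioo 0 T ×ˢ cylDomain d),
          ∑ i : Fin 2, τ p.1 p.2 i *
            fderiv ℝ (fun y => G p.1 y i) (Function.update p.2 0 1) (Pi.single 0 1)) = 0 := by
    have : ∀ p : ℝ × (Fin (d+1) → ℝ), u19V n δ 0 (Function.update p.2 0 1) = 0 := fun p =>
      u19V_right n δ _ (by simp)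
    simp [d2, this]
  rw [z1, z2] at hw
  have mρ : ∀ i, Measurable (fun p : ℝ × (Fin (d + 1) → ℝ) => ρ p.1 p.2 i) := measurable_pi_iff.1 hm
  have bρ : ∀ i (p : ℝ × (Fin (d + 1) → ℝ)), |ρ p.1 p.2 i| ≤ 1 := by
    intro i p
    obtain ⟨⟨q1, q2⟩, q3, q4⟩ := hbd p.1 p.2
    rw [abs_le]
    fin_cases i <;> simp <;> constructor <;> linarith
  have cv2 : Continuous (fun p : ℝ × (Fin (d + 1) → ℝ) => v p.2) := hvs.continuous.comp continuous_snd
  have ca1 : Continuous (fun p : ℝ × (Fin (d + 1) → ℝ) => a p.1) := ha.continuous.comp continuous_fst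
  have cd1 : Continuous (fun p : ℝ × (Fin (d + 1) → ℝ) => deriv a p.1) := hac.comp continuous_fst
  have iA : Integrable (fun p : ℝ × (Fin (d + 1) → ℝ) => ρ p.1 p.2 i * (deriv a p.1 * v p.2))
      (volume.restrict (Ioo 0 T ×ˢ cylDomain d)) :=
    intS19 d T _ _ (cd1.mul cv2) (mρ i) 1 (bρ i)
  have iB : Integrable (fun p : ℝ × (Fin (d + 1) → ℝ) =>
      ρ p.1 p.2 i * (∑ k, (a p.1 * (- u19mu n k ^ 2 * v p.2))))
      (volume.restrict (Ioo 0 T ×ˢ cylDomain d)) :=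
    intS19 d T _ _ (continuous_finsetSum _ fun k _ => ca1.mul (continuous_const.mul cv2))
      (mρ i) 1 (bρ i)
  have iC : Integrable (fun p : ℝ × (Fin (d + 1) → ℝ) =>
      ∑ k, ∑ j, SigmaBC (ρ p.1 p.2) i j *
            (1/2 * (u19D E H k j p * (a p.1 * (u19mu n k * u19V n δ k p.2)))))
      (volume.restrict (Ioo 0 T ×ˢ cylDomain d)) := by
    refine integrable_finsetSum _ fun k _ => integrable_finsetSum _ fun j _ => ?_
    refine intS19 d T _ _ ?_ (sigma_meas ρ hm i j) 4 fun p => sigma_bd _ (hbd _ _).1 (hbd _ _).2 i j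
    exact continuous_const.mul ((u19D_cont E H hH k j).mul (ca1.mul (continuous_const.mul
      ((u19V_cont n δ k).comp continuous_snd))))
  have eA : ∀ p : ℝ × (Fin (d + 1) → ℝ), ∑ i : Fin 2, ρ p.1 p.2 i * deriv (fun s => G s p.2 i) p.1
      = ρ p.1 p.2 i * (deriv a p.1 * v p.2) := by
    intro p; simp [d1, he]
  have eB : ∀ p : ℝ × (Fin (d + 1) → ℝ), ∑ i : Fin 2, ρ p.1 p.2 i *
            ∑ k, fderiv ℝ (fun y => fderiv ℝ (fun z => G p.1 z i) y (Pi.single k 1)) p.2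
              (Pi.single k 1)
      = ρ p.1 p.2 i * (∑ k, (a p.1 * (- u19mu n k ^ 2 * v p.2))) := by
    intro p; simp only [d3, he, ← Finset.mul_sum]; simp
  have eC : ∀ p : ℝ × (Fin (d + 1) → ℝ),
      ∑ k, (fun i => fderiv ℝ (fun y => G p.1 y i) p.2 (Pi.single k 1)) ⬝ᵥ
            (SigmaBC (ρ p.1 p.2)).mulVec
              (fun i => E k i + 2 * fderiv ℝ (fun y => H p.1 y i) p.2 (Pi.single k 1))
      = 2 * ∑ k, ∑ j, SigmaBC (ρ p.1 p.2) i j *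
            (1/2 * (u19D E H k j p * (a p.1 * (u19mu n k * u19V n δ k p.2)))) := by
    intro p
    rw [Finset.mul_sum]
    refine Finset.sum_congr rfl fun k _ => ?_
    simp only [d2, dotProduct, he, ite_mul, one_mul, zero_mul, Finset.sum_ite_eq',
      Finset.mem_univ, if_true, mulVec]
    rw [Finset.mul_sum, Finset.mul_sum]
    refine Finset.sum_congr rfl fun j _ => ?_
    simp only [u19D]; ring
  simp only [eA, eB, eC, integral_const_mul] at hw
  have tot : ∀ p : ℝ × (Fin (d + 1) → ℝ),
      (ρ p.1 p.2 i * ((deriv a p.1 - (∑ k, u19mu n k ^ 2) * a p.1) * v p.2)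
          + ∑ k, ∑ j, SigmaBC (ρ p.1 p.2) i j *
            (1/2 * (u19D E H k j p * (a p.1 * (u19mu n k * u19V n δ k p.2)))))
      = (ρ p.1 p.2 i * (deriv a p.1 * v p.2) + ρ p.1 p.2 i * (∑ k, (a p.1 * (- u19mu n k ^ 2 * v p.2))))
        + ∑ k, ∑ j, SigmaBC (ρ p.1 p.2) i j *
            (1/2 * (u19D E H k j p * (a p.1 * (u19mu n k * u19V n δ k p.2)))) := by
    intro p
    rw [← Finset.mul_sum, ← Finset.sum_mul, Finset.sum_neg_distrib]
    ring
  simp only [tot]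
  refine ⟨(iA.add iB).add iC, ?_⟩
  have s1 := integral_add (iA.add iB) iC
  have s2 := integral_add iA iB
  simp only [Pi.add_apply] at s1
  rw [s1, s2]
  linarith

lemma parsevalV (d : ℕ) (k : Fin (d+1)) (h : (Fin (d+1) → ℝ) → ℝ) (hh : Measurable h) (C : ℝ)
    (hC : ∀ x, |h x| ≤ C) :
    HasSum (fun n : Fin (d+1) → ℤ => (∫ x in cylDomain d, h x * u19V n 0 k x)^2
      + (∫ x in cylDomain d, h x * u19V n (Real.pi/2) k x)^2) (2 * ∫ x in cylDomain d, h x ^ 2) := by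
  by_cases hk : k = 0
  · simp only [u19V, hk, if_true]
    exact parseval_cyl d _ (Or.inr rfl) h hh C hC
  · simp only [u19V, hk, if_false]
    have := parseval_cyl d _ (Or.inl rfl) h hh C hC
    refine this.congr_fun fun n => ?_
    have e : ∀ x, u19W n (-(Real.pi/2)) (Real.pi/2 + Real.pi/2) x = - u19W n (-(Real.pi/2)) 0 x := by
      intro x
      have := u19W_pi n (-(Real.pi/2)) 0 x
      rwa [zero_add] at this
    simp only [e, mul_neg, integral_neg, zero_add, neg_sq]
    ring

lemma sl_int19 (d : ℕ) (q : ℝ × (Fin (d+1) → ℝ) → ℝ) (hq : Measurable q) (C : ℝ)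
    (hC : ∀ p, |q p| ≤ C) (t : ℝ) : Integrable (fun x => q (t, x)) (volume.restrict (cylDomain d)) :=
  Integrable.of_bound (hq.comp measurable_prodMk_left).aestronglyMeasurable C
    (Filter.Eventually.of_forall fun x => hC (t, x))

lemma sl_meas19 (d : ℕ) (q : ℝ × (Fin (d+1) → ℝ) → ℝ) (hq : Measurable q) :
    Measurable (fun t => ∫ x in cylDomain d, q (t, x)) := by
  have := StronglyMeasurable.integral_prod_right' hq.stronglyMeasurable (ν := volume.restrict (cylDomain d))
  exact this.measurable

lemma sl_bd19 (d : ℕ) (q : ℝ × (Fin (d+1) → ℝ) → ℝ) (C : ℝ)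
    (hC : ∀ p, |q p| ≤ C) (t : ℝ) : |∫ x in cylDomain d, q (t, x)| ≤
      C * (volume.restrict (cylDomain d)).real univ := by
  have := norm_integral_le_of_norm_le_const (μ := volume.restrict (cylDomain d))
    (f := fun x => q (t, x)) (C := C) (Filter.Eventually.of_forall fun x => hC (t, x))
  exact this

lemma core_mode (d : ℕ) (T : ℝ) (hT : 0 < T)
    (w : ℝ × (Fin (d+1) → ℝ) → ℝ) (F : Fin (d+1) → ℝ × (Fin (d+1) → ℝ) → ℝ)
    (hw : Measurable w) (Cw : ℝ) (hCw : ∀ p, |w p| ≤ Cw)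
    (hF : ∀ k, Measurable (F k)) (CF : ℝ) (hCF : ∀ k p, |F k p| ≤ CF)
    (n : Fin (d+1) → ℤ) (δ : ℝ)
    (hyp : ∀ a : ℝ → ℝ, ContDiff ℝ 2 a → a T = 0 →
      ∫ p in Ioo 0 T ×ˢ cylDomain d,
          (w p * ((deriv a p.1 - (∑ k, u19mu n k ^ 2) * a p.1) * u19W n (-(Real.pi/2)) δ p.2)
          + ∑ k, F k p * (a p.1 * (u19mu n k * u19V n δ k p.2))) = 0) :
    ∀ᵐ s ∂volume.restrict (Ioo 0 T),
      (∫ x in cylDomain d, w (s, x) * u19W n (-(Real.pi/2)) δ x) ^ 2 ≤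
        ∫ t in Ioo 0 s, ∑ k, (∫ x in cylDomain d, F k (t, x) * u19V n δ k x) ^ 2 := by
  have mW : Measurable (fun p : ℝ × (Fin (d+1) → ℝ) => w p * u19W n (-(Real.pi/2)) δ p.2) :=
    hw.mul ((u19W_cont _ _ _).measurable.comp measurable_snd)
  have mV : ∀ k, Measurable (fun p : ℝ × (Fin (d+1) → ℝ) => F k p * u19V n δ k p.2) := fun k =>
    (hF k).mul ((u19V_cont _ _ _).measurable.comp measurable_snd)
  have bW : ∀ p : ℝ × (Fin (d+1) → ℝ), |w p * u19W n (-(Real.pi/2)) δ p.2| ≤ Cw := by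
    intro p; rw [abs_mul]
    exact (mul_le_of_le_one_right (abs_nonneg _) (u19W_le _ _ _ _)).trans (hCw p)
  have bV : ∀ k (p : ℝ × (Fin (d+1) → ℝ)), |F k p * u19V n δ k p.2| ≤ CF := by
    intro k p; rw [abs_mul]
    exact (mul_le_of_le_one_right (abs_nonneg _) (u19V_le _ _ _ _)).trans (hCF k p)
  set m := (volume.restrict (cylDomain d)).real univ with hm
  set c : ℝ → ℝ := fun t => ∫ x in cylDomain d, w (t, x) * u19W n (-(Real.pi/2)) δ x with hc
  set B : Fin (d+1) → ℝ → ℝ := fun k t => ∫ x in cylDomain d, F k (t, x) * u19V n δ k x with hB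
  have mc : Measurable c := sl_meas19 d _ mW
  have mB : ∀ k, Measurable (B k) := fun k => sl_meas19 d _ (mV k)
  have bc : ∀ t, |c t| ≤ Cw * m := fun t => sl_bd19 d _ Cw bW t
  have bB : ∀ k t, |B k t| ≤ CF * m := fun k t => sl_bd19 d _ CF (bV k) t
  have dual := dual19 T (∑ k, u19mu n k ^ 2) (Cw * m) (∑ k, |u19mu n k| * (CF * m)) hT
    (Finset.sum_nonneg fun k _ => sq_nonneg _) c (fun t => ∑ k, u19mu n k * B k t) mc
    (Finset.measurable_fun_sum _ fun k _ => (mB k).const_mul _) bc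
    (fun t => (Finset.abs_sum_le_sum_abs _ _).trans (Finset.sum_le_sum fun k _ => by
      rw [abs_mul]; exact mul_le_mul_of_nonneg_left (bB k t) (abs_nonneg _)))
    (by
      intro a ha haT
      have key := hyp a ha haT
      have had : Continuous (deriv a) := ha.continuous_deriv (by norm_num)
      have hac : Continuous a := ha.continuous
      have hint : IntegrableOn (fun p : ℝ × (Fin (d+1) → ℝ) =>
          (w p * ((deriv a p.1 - (∑ k, u19mu n k ^ 2) * a p.1) * u19W n (-(Real.pi/2)) δ p.2)
          + ∑ k, F k p * (a p.1 * (u19mu n k * u19V n δ k p.2)))) (Ioo 0 T ×ˢ cylDomain d)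
          ((volume : Measure ℝ).prod (volume : Measure (Fin (d+1) → ℝ))) := by
        refine Integrable.add ?_ (integrable_finsetSum _ fun k _ => ?_)
        · exact intS19 d T _ _ (((had.comp continuous_fst).sub (continuous_const.mul
            (hac.comp continuous_fst))).mul ((u19W_cont _ _ _).comp continuous_snd)) hw Cw hCw
        · exact intS19 d T _ _ ((hac.comp continuous_fst).mul (continuous_const.mul
            ((u19V_cont _ _ _).comp continuous_snd))) (hF k) CF (hCF k)
      rw [Measure.volume_eq_prod, setIntegral_prod _ hint] at key
      refine Eq.trans ?_ key
      refine integral_congr_ae (Filter.Eventually.of_forall fun t => ?_)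
      have i1 := sl_int19 d _ mW Cw bW t
      have i2 := fun k => sl_int19 d _ (mV k) CF (bV k) t
      have e : ∀ x, (w (t, x) * ((deriv a t - (∑ k, u19mu n k ^ 2) * a t) * u19W n (-(Real.pi/2)) δ x)
          + ∑ k, F k (t, x) * (a t * (u19mu n k * u19V n δ k x)))
          = (deriv a t - (∑ k, u19mu n k ^ 2) * a t) * (w (t, x) * u19W n (-(Real.pi/2)) δ x)
          + ∑ k, (a t * u19mu n k) * (F k (t, x) * u19V n δ k x) := by
        intro x
        congr 1
        · ring
        · exact Finset.sum_congr rfl fun k _ => by ring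
      simp only [e]
      rw [integral_add (i1.const_mul (deriv a t - (∑ k, u19mu n k ^ 2) * a t))
        (integrable_finsetSum Finset.univ fun k _ => (i2 k).const_mul (a t * u19mu n k)),
        integral_finsetSum Finset.univ fun k _ => (i2 k).const_mul (a t * u19mu n k)]
      simp only [integral_const_mul]
      rw [mul_comm (c t)]
      congr 1
      rw [Finset.sum_mul]
      refine Finset.sum_congr rfl fun k _ => ?_
      change u19mu n k * B k t * a t = a t * u19mu n k * B k t
      ring)
  filter_upwards [dual, ae_restrict_mem measurableSet_Ioo] with s hs hs'
  have en := energy19 s (CF * m) hs'.1.le (u19mu n) B mB bB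
  rw [← hs] at en
  exact en

lemma core_all (d : ℕ) (T : ℝ) (hT : 0 < T)
    (w : Fin 2 → ℝ × (Fin (d+1) → ℝ) → ℝ) (F : Fin (d+1) → Fin 2 → ℝ × (Fin (d+1) → ℝ) → ℝ)
    (hw : ∀ i, Measurable (w i)) (Cw : ℝ) (hCw : ∀ i p, |w i p| ≤ Cw)
    (hF : ∀ k i, Measurable (F k i)) (CF : ℝ) (hCF : ∀ k i p, |F k i p| ≤ CF)
    (K : ℝ) (hK : 0 ≤ K) (hFw : ∀ k i p, F k i p ^ 2 ≤ K * ∑ j, w j p ^ 2)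
    (hyp : ∀ n δ i, ∀ a : ℝ → ℝ, ContDiff ℝ 2 a → a T = 0 →
      ∫ p in Ioo 0 T ×ˢ cylDomain d,
          (w i p * ((deriv a p.1 - (∑ k, u19mu n k ^ 2) * a p.1) * u19W n (-(Real.pi/2)) δ p.2)
          + ∑ k, F k i p * (a p.1 * (u19mu n k * u19V n δ k p.2))) = 0) :
    ∀ᵐ p ∂(volume.restrict (Ioo 0 T ×ˢ cylDomain d)), ∀ i, w i p = 0 := by
  set m := (volume.restrict (cylDomain d)).real univ with hm
  set q : ℝ × (Fin (d+1) → ℝ) → ℝ := fun p => ∑ j, w j p ^ 2 with hq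
  have mq : Measurable q := Finset.measurable_fun_sum _ fun j _ => (hw j).pow_const 2
  have q0 : ∀ p, 0 ≤ q p := fun p => Finset.sum_nonneg fun j _ => sq_nonneg _
  have bw2 : ∀ i p, w i p ^ 2 ≤ Cw ^ 2 := fun i p => by
    rw [← sq_abs (w i p)]; exact pow_le_pow_left₀ (abs_nonneg _) (hCw i p) 2
  have bq : ∀ p, |q p| ≤ 2 * Cw ^ 2 := by
    intro p; rw [abs_of_nonneg (q0 p)]
    simp only [hq, Fin.sum_univ_two]
    linarith [bw2 0 p, bw2 1 p]
  set y : ℝ → ℝ := fun t => ∫ x in cylDomain d, q (t, x) with hy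
  have my : Measurable y := sl_meas19 d q mq
  have y0 : ∀ t, 0 ≤ y t := fun t => integral_nonneg fun x => q0 _
  have by' : ∀ t, |y t| ≤ 2 * Cw ^ 2 * m := fun t => sl_bd19 d q _ bq t
  have modes : ∀ᵐ s ∂volume.restrict (Ioo 0 T), ∀ (n : Fin (d+1) → ℤ) (i : Fin 2),
      ((∫ x in cylDomain d, w i (s, x) * u19W n (-(Real.pi/2)) 0 x) ^ 2 ≤
        ∫ t in Ioo 0 s, ∑ k, (∫ x in cylDomain d, F k i (t, x) * u19V n 0 k x) ^ 2) ∧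
      ((∫ x in cylDomain d, w i (s, x) * u19W n (-(Real.pi/2)) (Real.pi/2) x) ^ 2 ≤
        ∫ t in Ioo 0 s, ∑ k, (∫ x in cylDomain d, F k i (t, x) * u19V n (Real.pi/2) k x) ^ 2) := by
    rw [ae_all_iff]; intro n
    rw [ae_all_iff]; intro i
    filter_upwards [core_mode d T hT (w i) (fun k => F k i) (hw i) Cw (hCw i) (fun k => hF k i) CF
      (fun k => hCF k i) n 0 (hyp n 0 i), core_mode d T hT (w i) (fun k => F k i) (hw i) Cw (hCw i)
      (fun k => hF k i) CF (fun k => hCF k i) n (Real.pi/2) (hyp n _ i)] with s h1 h2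
    exact ⟨h1, h2⟩
  have main : ∀ᵐ s ∂volume.restrict (Ioo 0 T), y s ≤ (2 * (d+1) * K) * ∫ t in Ioo 0 s, y t := by
    filter_upwards [modes, ae_restrict_mem measurableSet_Ioo] with s hs hs'
    have iy : IntegrableOn y (Ioo 0 s) :=
      Measure.integrableOn_of_bounded (M := 2 * Cw ^ 2 * m) (by simp) my.aestronglyMeasurable
        (Filter.Eventually.of_forall by')
    have each : ∀ i, 2 * ∫ x in cylDomain d, w i (s, x) ^ 2 ≤ (2 * (d+1) * K) * ∫ t in Ioo 0 s, y t := by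
      intro i
      refine hasSum_le_of_sum_le (parseval_cyl d _ (Or.inl rfl) (fun x => w i (s, x))
        ((hw i).comp measurable_prodMk_left) Cw (fun x => hCw i _)) fun A => ?_
      have mB : ∀ n δ k, Measurable (fun t => ∫ x in cylDomain d, F k i (t, x) * u19V n δ k x) :=
        fun n δ k => sl_meas19 d (fun p => F k i p * u19V n δ k p.2)
          ((hF k i).mul ((u19V_cont _ _ _).measurable.comp measurable_snd))
      have bB : ∀ n δ k t, |∫ x in cylDomain d, F k i (t, x) * u19V n δ k x| ≤ CF * m :=
        fun n δ k t => sl_bd19 d (fun p => F k i p * u19V n δ k p.2) CF (fun p => by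
          rw [abs_mul]
          exact (mul_le_of_le_one_right (abs_nonneg _) (u19V_le _ _ _ _)).trans (hCF k i p)) t
      have iB : ∀ n δ, IntegrableOn (fun t => ∑ k, (∫ x in cylDomain d, F k i (t, x) * u19V n δ k x) ^ 2)
          (Ioo 0 s) := by
        intro n δ
        refine integrable_finsetSum _ fun k _ => ?_
        refine Measure.integrableOn_of_bounded (M := (CF * m) ^ 2) (by simp)
          ((mB n δ k).pow_const 2).aestronglyMeasurable (Filter.Eventually.of_forall fun t => ?_)
        rw [Real.norm_eq_abs, abs_pow]
        exact pow_le_pow_left₀ (abs_nonneg _) (bB n δ k t) 2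
      calc _ ≤ ∑ n ∈ A, ((∫ t in Ioo 0 s, ∑ k, (∫ x in cylDomain d, F k i (t, x) * u19V n 0 k x) ^ 2)
            + ∫ t in Ioo 0 s, ∑ k, (∫ x in cylDomain d, F k i (t, x) * u19V n (Real.pi/2) k x) ^ 2) :=
            Finset.sum_le_sum fun n _ => add_le_add (hs n i).1 (hs n i).2
        _ = ∫ t in Ioo 0 s, ∑ n ∈ A, ((∑ k, (∫ x in cylDomain d, F k i (t, x) * u19V n 0 k x) ^ 2)
            + ∑ k, (∫ x in cylDomain d, F k i (t, x) * u19V n (Real.pi/2) k x) ^ 2) := by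
            refine Eq.trans ?_ (integral_finsetSum A fun n _ => (iB n 0).add (iB n (Real.pi/2))).symm
            exact Finset.sum_congr rfl fun n _ => (integral_add (iB n _) (iB n _)).symm
        _ ≤ ∫ t in Ioo 0 s, (2 * (d+1) * K) * y t := by
            refine integral_mono (integrable_finsetSum _ fun n _ => (iB n _).add (iB n _))
              (iy.const_mul _) fun t => ?_
            simp only [← Finset.sum_add_distrib]
            rw [Finset.sum_comm]
            have hk : ∀ k : Fin (d+1), ∑ n ∈ A, ((∫ x in cylDomain d, F k i (t, x) * u19V n 0 k x) ^ 2
              + (∫ x in cylDomain d, F k i (t, x) * u19V n (Real.pi/2) k x) ^ 2) ≤ 2 * (K * y t) := by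
              intro k
              have mF : Measurable (fun x => F k i (t, x)) := (hF k i).comp measurable_prodMk_left
              refine (sum_le_hasSum A (fun n _ => by positivity) (parsevalV d k (fun x => F k i (t, x))
                mF CF (fun x => hCF k i _))).trans ?_
              refine mul_le_mul_of_nonneg_left ?_ (by norm_num)
              rw [hy]
              simp only
              rw [← integral_const_mul]
              refine integral_mono ?_ ((sl_int19 d q mq _ bq t).const_mul _) fun x => hFw k i (t, x)
              refine sl_int19 d (fun p => F k i p ^ 2) ((hF k i).pow_const 2) (CF ^ 2) (fun p => ?_) t
              rw [abs_pow]
              exact pow_le_pow_left₀ (abs_nonneg _) (hCF k i p) 2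
            refine (Finset.sum_le_sum fun k _ => hk k).trans (le_of_eq ?_)
            simp; ring
        _ = _ := integral_const_mul _ _
    have iw : ∀ i, Integrable (fun x => w i (s, x) ^ 2) (volume.restrict (cylDomain d)) := fun i =>
      sl_int19 d (fun p => w i p ^ 2) ((hw i).pow_const 2) (Cw ^ 2) (fun p => by
        rw [abs_of_nonneg (sq_nonneg _)]; exact bw2 i p) s
    have ys : y s = (∫ x in cylDomain d, w 0 (s, x) ^ 2) + ∫ x in cylDomain d, w 1 (s, x) ^ 2 := by
      rw [← integral_add (iw 0) (iw 1)]
      simp [hy, hq, Fin.sum_univ_two]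
    linarith [each 0, each 1]
  have yz := gron19 T (2 * (d+1) * K) (2 * Cw ^ 2 * m) y my y0
    (fun s => (le_abs_self _).trans (by' s)) (by positivity) main
  have iq : Integrable q (volume.restrict (Ioo 0 T ×ˢ cylDomain d)) := by
    have := intS19 d T (fun _ => 1) q continuous_const mq _ bq
    simpa using this
  have tot : ∫ p in Ioo 0 T ×ˢ cylDomain d, q p = 0 := by
    rw [Measure.volume_eq_prod, setIntegral_prod _ (by rw [← Measure.volume_eq_prod]; exact iq)]
    refine integral_eq_zero_of_ae ?_
    filter_upwards [yz] with s hs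
    exact hs
  rw [integral_eq_zero_iff_of_nonneg (fun p => q0 p) iq] at tot
  filter_upwards [tot] with p hp i
  have := (Finset.sum_eq_zero_iff_of_nonneg fun j _ => sq_nonneg (w j p)).1 hp i (Finset.mem_univ _)
  exact pow_eq_zero_iff (two_ne_zero) |>.1 this

lemma sigma_lip (a b : Fin 2 → ℝ) (ha0 : a 0 ∈ Icc (-1:ℝ) 1) (ha1 : a 1 ∈ Icc (0:ℝ) 1)
    (hb0 : b 0 ∈ Icc (-1:ℝ) 1) (hb1 : b 1 ∈ Icc (0:ℝ) 1) (i j : Fin 2) :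
    (SigmaBC a i j - SigmaBC b i j) ^ 2 ≤ 32 * ((a 0 - b 0) ^ 2 + (a 1 - b 1) ^ 2) := by
  obtain ⟨ha0, ha0'⟩ := ha0
  obtain ⟨ha1, ha1'⟩ := ha1
  obtain ⟨hb0, hb0'⟩ := hb0
  obtain ⟨hb1, hb1'⟩ := hb1
  have gen : ∀ u v : ℝ, u ^ 2 ≤ 4 → v ^ 2 ≤ 4 → (2 * ((a 0 - b 0) * u + (a 1 - b 1) * v)) ^ 2 ≤
      32 * ((a 0 - b 0) ^ 2 + (a 1 - b 1) ^ 2) := by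
    intro u v hu hv
    have h1 : (2 * ((a 0 - b 0) * u + (a 1 - b 1) * v)) ^ 2 ≤
      8 * ((a 0 - b 0) ^ 2 * u ^ 2 + (a 1 - b 1) ^ 2 * v ^ 2) := by
      nlinarith [sq_nonneg ((a 0 - b 0) * u - (a 1 - b 1) * v)]
    have h2 := mul_le_mul_of_nonneg_left hu (sq_nonneg (a 0 - b 0))
    have h3 := mul_le_mul_of_nonneg_left hv (sq_nonneg (a 1 - b 1))
    linarith
  have e01 : 2 * (a 0 * (1 - a 1)) - 2 * (b 0 * (1 - b 1)) =
      2 * ((a 0 - b 0) * (1 - a 1) + (a 1 - b 1) * (- b 0)) := by ring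
  have e00 : 2 * (a 1 - a 0 ^ 2) - 2 * (b 1 - b 0 ^ 2) =
      2 * ((a 0 - b 0) * (-(a 0 + b 0)) + (a 1 - b 1) * 1) := by ring
  have e11 : 2 * (a 1 * (1 - a 1)) - 2 * (b 1 * (1 - b 1)) =
      2 * ((a 0 - b 0) * 0 + (a 1 - b 1) * (1 - a 1 - b 1)) := by ring
  fin_cases i <;> fin_cases j <;> simp [SigmaBC]
  · rw [e00]; exact gen _ _ (by nlinarith) (by norm_num)
  · rw [e01]; exact gen _ _ (by nlinarith) (by nlinarith)
  · rw [e01]; exact gen _ _ (by nlinarith) (by nlinarith)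
  · rw [e11]; exact gen _ _ (by norm_num) (by nlinarith)

/-- Uniqueness of weak solutions of the coupled parabolic system with mixed
Dirichlet–Neumann boundary conditions and weak asymmetry `Ê`, perturbed by a
smooth field `Ĥ` vanishing on `Γ⁻`: two weak solutions with the same boundary
data `b̂` and initial data `γ̂` coincide a.e. on `[0,T] × Λ`. -/
theorem stmt_19 (d : ℕ) (T : ℝ) (hT : 0 < T)
    (E : Fin (d + 1) → Fin 2 → ℝ)
    (H : ℝ → (Fin (d + 1) → ℝ) → Fin 2 → ℝ) (hH : TestBdry d H)
    (b γ : (Fin (d + 1) → ℝ) → Fin 2 → ℝ)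
    (hb0 : ∀ (x : Fin (d + 1) → ℝ) (c : ℝ), b (Function.update x 0 c) = b x)
    (hbI : ∀ x, |b x 0| < b x 1 ∧ b x 1 < 1)
    (ρ₁ ρ₂ : ℝ → (Fin (d + 1) → ℝ) → Fin 2 → ℝ)
    (g₁ g₂ : Fin (d + 1) → ℝ → (Fin (d + 1) → ℝ) → Fin 2 → ℝ)
    (τ₁ τ₂ : ℝ → (Fin (d + 1) → ℝ) → Fin 2 → ℝ)
    (h₁ : IsWeakSolutionBC d T E H b γ ρ₁ g₁ τ₁)
    (h₂ : IsWeakSolutionBC d T E H b γ ρ₂ g₂ τ₂) :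
    ∀ᵐ p ∂(volume.restrict (Set.Ioo 0 T ×ˢ cylDomain d)),
      ρ₁ (p : ℝ × (Fin (d + 1) → ℝ)).1 p.2 = ρ₂ p.1 p.2 := by
  have m1 := h₁.1
  have m2 := h₂.1
  have b1 := h₁.2.1
  have b2 := h₂.2.1
  set S : Set (ℝ × (Fin (d+1) → ℝ)) := Set.Ioo 0 T ×ˢ cylDomain d with hS
  have mS : MeasurableSet S := measurableSet_Ioo.prod (meas_cyl d)
  obtain ⟨C, hC⟩ : ∃ C : ℝ, ∀ p ∈ S, ∀ k j, |u19D E H k j p| ≤ C := by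
    have hc : Continuous (fun p => ∑ k, ∑ j, |u19D E H k j p|) :=
      continuous_finsetSum _ fun k _ => continuous_finsetSum _ fun j _ => (u19D_cont E H hH k j).abs
    obtain ⟨C, hC⟩ := (isCompact_Icc (a := ((0:ℝ), fun _ : Fin (d+1) => (-1:ℝ)))
      (b := (T, fun _ => (1:ℝ)))).exists_bound_of_continuousOn hc.continuousOn
    refine ⟨C, fun p hp k j => ?_⟩
    have hp' : p ∈ Icc ((0:ℝ), fun _ : Fin (d+1) => (-1:ℝ)) (T, fun _ => (1:ℝ)) := by
      obtain ⟨ht, hx⟩ := hp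
      refine ⟨⟨ht.1.le, fun i => ?_⟩, ⟨ht.2.le, fun i => ?_⟩⟩
      · by_cases hi : i = 0
        · subst hi; exact hx.1.le
        · exact (by norm_num : (-1:ℝ) ≤ 0).trans (hx.2.2 i hi).1
      · by_cases hi : i = 0
        · subst hi; exact hx.2.1.le
        · exact (hx.2.2 i hi).2.le
    refine le_trans ?_ ((le_abs_self _).trans (hC p hp'))
    refine le_trans ?_ (Finset.single_le_sum (f := fun k => ∑ j, |u19D E H k j p|)
      (fun k _ => Finset.sum_nonneg fun j _ => abs_nonneg _) (Finset.mem_univ k))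
    exact Finset.single_le_sum (f := fun j => |u19D E H k j p|)
      (fun j _ => abs_nonneg _) (Finset.mem_univ j)
  set w : Fin 2 → ℝ × (Fin (d+1) → ℝ) → ℝ := fun i p => ρ₁ p.1 p.2 i - ρ₂ p.1 p.2 i with hw
  set Q : Fin (d+1) → Fin 2 → ℝ × (Fin (d+1) → ℝ) → ℝ := fun k i p =>
    ∑ j, (SigmaBC (ρ₁ p.1 p.2) i j - SigmaBC (ρ₂ p.1 p.2) i j) * (1/2 * u19D E H k j p) with hQ
  set F : Fin (d+1) → Fin 2 → ℝ × (Fin (d+1) → ℝ) → ℝ := fun k i => S.indicator (Q k i) with hF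
  have mw : ∀ i, Measurable (w i) := fun i =>
    ((measurable_pi_iff.1 m1) i).sub ((measurable_pi_iff.1 m2) i)
  have bw : ∀ i p, |w i p| ≤ 2 := by
    intro i p
    obtain ⟨⟨q1, q2⟩, q3, q4⟩ := b1 p.1 p.2
    obtain ⟨⟨r1, r2⟩, r3, r4⟩ := b2 p.1 p.2
    rw [abs_le]
    fin_cases i <;> simp [hw] <;> constructor <;> linarith
  have mQ : ∀ k i, Measurable (Q k i) := fun k i => Finset.measurable_fun_sum _ fun j _ =>
    ((sigma_meas ρ₁ m1 i j).sub (sigma_meas ρ₂ m2 i j)).mul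
      ((u19D_cont E H hH k j).measurable.const_mul _)
  have mF : ∀ k i, Measurable (F k i) := fun k i => (mQ k i).indicator mS
  have FK : ∀ k i p, F k i p ^ 2 ≤ (32 * C ^ 2) * ∑ j, w j p ^ 2 := by
    intro k i p
    by_cases hp : p ∈ S
    · simp only [hF, Set.indicator_of_mem hp, hQ, hw, Fin.sum_univ_two]
      have l0 := sigma_lip _ _ (b1 p.1 p.2).1 (b1 p.1 p.2).2 (b2 p.1 p.2).1 (b2 p.1 p.2).2 i 0
      have l1 := sigma_lip _ _ (b1 p.1 p.2).1 (b1 p.1 p.2).2 (b2 p.1 p.2).1 (b2 p.1 p.2).2 i 1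
      have c0 : u19D E H k 0 p ^ 2 ≤ C ^ 2 := by
        rw [← sq_abs]; exact pow_le_pow_left₀ (abs_nonneg _) (hC p hp k 0) 2
      have c1 : u19D E H k 1 p ^ 2 ≤ C ^ 2 := by
        rw [← sq_abs]; exact pow_le_pow_left₀ (abs_nonneg _) (hC p hp k 1) 2
      have t0 := mul_le_mul l0 c0 (sq_nonneg _) (by positivity)
      have t1 := mul_le_mul l1 c1 (sq_nonneg _) (by positivity)
      generalize SigmaBC (ρ₁ p.1 p.2) i 0 - SigmaBC (ρ₂ p.1 p.2) i 0 = x0 at *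
      generalize SigmaBC (ρ₁ p.1 p.2) i 1 - SigmaBC (ρ₂ p.1 p.2) i 1 = x1 at *
      nlinarith [sq_nonneg (x0 * u19D E H k 0 p - x1 * u19D E H k 1 p)]
    · simp only [hF, Set.indicator_of_notMem hp]
      have : 0 ≤ ∑ j, w j p ^ 2 := Finset.sum_nonneg fun j _ => sq_nonneg _
      nlinarith [mul_nonneg (sq_nonneg C) this]
  have bF : ∀ k i p, |F k i p| ≤ 16 * |C| := by
    intro k i p
    refine abs_le_of_sq_le_sq ?_ (by positivity)
    refine (FK k i p).trans ?_
    rw [mul_pow, sq_abs, Fin.sum_univ_two]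
    have s0 : w 0 p ^ 2 ≤ 4 := by
      rw [← sq_abs]; nlinarith [bw 0 p, abs_nonneg (w 0 p)]
    have s1 : w 1 p ^ 2 ≤ 4 := by
      rw [← sq_abs]; nlinarith [bw 1 p, abs_nonneg (w 1 p)]
    nlinarith [sq_nonneg C]
  have fin := core_all d T hT w F mw 2 bw mF (16 * |C|) bF (32 * C ^ 2) (by positivity) FK (by
    intro n δ i a ha haT
    obtain ⟨R, hR⟩ := weak19 d T E H hH b γ n δ i a ha haT
    obtain ⟨i1, e1⟩ := hR ρ₁ g₁ τ₁ h₁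
    obtain ⟨i2, e2⟩ := hR ρ₂ g₂ τ₂ h₂
    have sub := integral_sub i1 i2
    rw [e1, e2, sub_self] at sub
    refine Eq.trans (setIntegral_congr_fun mS fun p hp => ?_) sub
    have hpS : p ∈ S := hp
    simp only [hF, hQ, hw]
    rw [add_sub_add_comm, ← sub_mul, ← Finset.sum_sub_distrib]
    congr 1
    refine Finset.sum_congr rfl fun k _ => ?_
    rw [← Finset.sum_sub_distrib, Set.indicator_of_mem hpS, Finset.sum_mul]
    exact Finset.sum_congr rfl fun j _ => by ring)
  filter_upwards [fin] with p hp
  funext i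
  exact sub_eq_zero.1 (hp i)
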